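/- arXiv:2605.20527 — 3 statements merged into one kernel-verified Lean document; each statement's English description precedes it below -/
import Mathlib

section
/- There exists an absolute constant M > 0 such that for every F in the Bargmann–Fock space F²(ℂ) one has inf_{|λ|=1} ‖F − λ·1‖_F ≤ M · ‖ |F| − 1 ‖_F, where the infimum is over unimodular complex scalars λ and 1 denotes the constant function one. -/
open MeasureTheory

/-- The Fock norm of a function `F : ℂ → E`:
`‖F‖_F² = (1/π) ∫_ℂ ‖F(z)‖² e^{-|z|²} dm(z)`. -/
noncomputable def fockNorm {E : Type*} [NormedAddCommGroup E] (F : ℂ → E) : ℝ :=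
  Real.sqrt ((1 / Real.pi) * ∫ z : ℂ, ‖F z‖ ^ 2 * Real.exp (-‖z‖ ^ 2))


lemma polar_eq_circleMap (c : ℂ) (p : ℝ × ℝ) :
    c + Complex.polarCoord.symm p = circleMap c p.1 p.2 := by
  rw [Complex.polarCoord_symm_apply, circleMap, Complex.exp_mul_I]
  simp

lemma area_mean_value {H : ℂ → ℂ} {c : ℂ} {s : ℝ} (hs : 0 < s)
    (hc : ContinuousOn H (Metric.closedBall c s)) (hd : DifferentiableOn ℂ H (Metric.ball c s)) :
    ∫ z in Metric.ball c s, H z = ((Real.pi * s ^ 2 : ℝ) : ℂ) * H c := by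
  have h1 : ∫ z in Metric.ball c s, H z
      = ∫ z, (Metric.ball c s).indicator H (c + z) := by
    rw [integral_add_left_eq_self (fun z => (Metric.ball c s).indicator H z),
      integral_indicator Metric.isOpen_ball.measurableSet]
  rw [h1, ← Complex.integral_comp_polarCoord_symm]
  have h2 : ∫ p in polarCoord.target, p.1 • (Metric.ball c s).indicator H
        (c + Complex.polarCoord.symm p)
      = ∫ p in polarCoord.target, (Set.Iio s ×ˢ Set.univ).indicator
          (fun p : ℝ × ℝ => p.1 • H (circleMap c p.1 p.2)) p := by
    refine setIntegral_congr_fun polarCoord.open_target.measurableSet (fun p hp => ?_)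
    have hp0 : 0 < p.1 := hp.1
    simp only [polar_eq_circleMap]
    by_cases h : p.1 < s
    · rw [Set.indicator_of_mem, Set.indicator_of_mem]
      · exact ⟨h, trivial⟩
      · simp [circleMap, abs_of_pos hp0, h]
    · rw [Set.indicator_of_notMem, Set.indicator_of_notMem]
      · simp
      · exact fun hh => h hh.1
      · simpa [circleMap, abs_of_pos hp0] using h
  rw [h2, setIntegral_indicator (measurableSet_Iio.prod MeasurableSet.univ)]
  have h3 : polarCoord.target ∩ (Set.Iio s ×ˢ Set.univ)
      = Set.Ioo 0 s ×ˢ Set.Ioo (-Real.pi) Real.pi := by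
    ext p
    simp [polarCoord_target]
    tauto
  rw [h3, Measure.volume_eq_prod, setIntegral_prod]
  · have h4 : ∀ r ∈ Set.Ioo (0:ℝ) s, ∫ θ in Set.Ioo (-Real.pi) Real.pi, r • H (circleMap c r θ)
        = r • ((2 * Real.pi) • H c) := by
      intro r hr
      have hcl : DiffContOnCl ℂ H (Metric.ball c |r|) := by
        rw [abs_of_pos hr.1]
        refine ⟨hd.mono (Metric.ball_subset_ball hr.2.le), hc.mono ?_⟩
        rw [closure_ball _ hr.1.ne']
        exact Metric.closedBall_subset_closedBall hr.2.le
      have := hcl.circleAverage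
      rw [Real.circleAverage_def] at this
      rw [integral_smul, ← this, ← integral_Ioc_eq_integral_Ioo,
        ← intervalIntegral.integral_of_le (by linarith [Real.pi_pos])]
      have hper : Function.Periodic (fun θ => H (circleMap c r θ)) (2 * Real.pi) := by
        intro θ
        simp [(periodic_circleMap c r) θ]
      have h5 := hper.intervalIntegral_add_eq (-Real.pi) 0
      rw [show -Real.pi + 2 * Real.pi = Real.pi by ring, zero_add] at h5
      rw [h5, smul_inv_smul₀ (by positivity)]
    rw [setIntegral_congr_fun measurableSet_Ioo h4, integral_smul_const,
      ← integral_Ioc_eq_integral_Ioo, ← intervalIntegral.integral_of_le hs.le, integral_id]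
    simp
    ring
  · refine IntegrableOn.mono_set (t := Set.Icc 0 s ×ˢ Set.Icc (-Real.pi) Real.pi) ?_
      (Set.prod_mono Set.Ioo_subset_Icc_self Set.Ioo_subset_Icc_self)
    refine ContinuousOn.integrableOn_compact (isCompact_Icc.prod isCompact_Icc) ?_
    refine continuousOn_fst.smul (hc.comp ?_ ?_)
    · unfold circleMap; fun_prop
    · rintro p ⟨hp, -⟩
      simp [circleMap, abs_of_nonneg hp.1, hp.2]

lemma area_norm_le {H : ℂ → ℂ} {c : ℂ} {s : ℝ} (hs : 0 < s)
    (hc : ContinuousOn H (Metric.closedBall c s)) (hd : DifferentiableOn ℂ H (Metric.ball c s)) :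
    Real.pi * s ^ 2 * ‖H c‖ ≤ ∫ z in Metric.ball c s, ‖H z‖ := by
  have := norm_integral_le_integral_norm (μ := volume.restrict (Metric.ball c s)) H
  rw [area_mean_value hs hc hd, norm_mul, Complex.norm_real,
    Real.norm_of_nonneg (by positivity)] at this
  exact this

lemma area_sq_le {H : ℂ → ℂ} {c : ℂ} {s : ℝ} (hs : 0 < s) (hd : Differentiable ℂ H) :
    Real.pi * s ^ 2 * ‖H c‖ ^ 2 ≤ ∫ z in Metric.ball c s, ‖H z‖ ^ 2 := by
  have := area_norm_le (H := fun z => H z ^ 2) (c := c) hs (hd.continuous.pow 2).continuousOn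
    (hd.pow 2).differentiableOn
  simpa using this

lemma intBall {E : Type*} [NormedAddCommGroup E] {f : ℂ → E} (hf : Continuous f) (c : ℂ) (s : ℝ) :
    IntegrableOn f (Metric.ball c s) :=
  (hf.continuousOn.integrableOn_compact (isCompact_closedBall c s)).mono_set
    Metric.ball_subset_closedBall

lemma area_one (c : ℂ) {s : ℝ} (hs : 0 < s) (k : ℝ) :
    ∫ _z in Metric.ball c s, k = Real.pi * s ^ 2 * k := by
  rw [setIntegral_const, measureReal_def, Complex.volume_ball]
  simp only [ENNReal.toReal_mul, ENNReal.toReal_pow, ENNReal.toReal_ofReal hs.le,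
    ENNReal.coe_toReal, NNReal.coe_real_pi, smul_eq_mul]
  ring

lemma ball_mono {f : ℂ → ℝ} (hf : Continuous f) (h0 : ∀ z, 0 ≤ f z) {c d : ℂ} {s t : ℝ}
    (h : ‖c - d‖ + s ≤ t) :
    ∫ z in Metric.ball c s, f z ≤ ∫ z in Metric.ball d t, f z := by
  refine setIntegral_mono_set (intBall hf d t) (Filter.Eventually.of_forall h0)
    (LE.le.eventuallyLE (Metric.ball_subset_ball' ?_))
  rw [dist_eq_norm]; linarith

lemma deriv_sq_le {G : ℂ → ℂ} (hG : Differentiable ℂ G) {r B : ℝ} (hr : 0 < r)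
    (hB : ∫ z in Metric.ball (0:ℂ) (2 * r), ‖G z‖ ^ 2 ≤ B) :
    ‖deriv G 0‖ ^ 2 ≤ B / (Real.pi * r ^ 4) := by
  have hpi := Real.pi_pos
  have h0 : 0 ≤ B := le_trans (integral_nonneg fun z => by positivity) hB
  have h1 : ∀ z ∈ Metric.sphere (0:ℂ) r, ‖G z‖ ≤ Real.sqrt (B / (Real.pi * r ^ 2)) := by
    intro z hz
    apply Real.le_sqrt_of_sq_le
    rw [le_div_iff₀ (by positivity)]
    have := area_sq_le (c := z) hr hG
    have h2 := ball_mono (f := fun z => ‖G z‖ ^ 2) (c := z) (d := 0) (s := r) (t := 2 * r)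
      (hG.continuous.norm.pow 2) (fun z => by positivity) (by
        simp at hz; simp [hz]; linarith)
    linarith
  have h2 := Complex.norm_deriv_le_of_forall_mem_sphere_norm_le hr hG.diffContOnCl h1
  calc ‖deriv G 0‖ ^ 2 ≤ (Real.sqrt (B / (Real.pi * r ^ 2)) / r) ^ 2 := by gcongr
    _ = _ := by
      rw [div_pow, Real.sq_sqrt (by positivity)]
      field_simp

lemma local_unit : ∃ C : ℝ, 0 < C ∧ ∀ F : ℂ → ℂ, Differentiable ℂ F →
    ‖deriv F 0‖ ^ 2 ≤ C * ∫ z in Metric.ball (0:ℂ) 1, (‖F z‖ - 1) ^ 2 := by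
  have hpi := Real.pi_pos
  set ε : ℝ := Real.pi / 921600 with hε
  have hε0 : 0 < ε := by positivity
  refine ⟨(32 / Real.pi) * (1 + Real.pi / ε) + 320 * 4 / Real.pi, by positivity, fun F hF => ?_⟩
  have hcF := hF.continuous
  have hcv : Continuous (fun z => (‖F z‖ - 1) ^ 2) := by fun_prop
  have hcF2 : Continuous (fun z => ‖F z‖ ^ 2) := by fun_prop
  set I := ∫ z in Metric.ball (0:ℂ) 1, (‖F z‖ - 1) ^ 2 with hI
  have hI0 : 0 ≤ I := integral_nonneg fun z => by positivity

  have hL2 : ∫ z in Metric.ball (0:ℂ) 1, ‖F z‖ ^ 2 ≤ 2 * I + 2 * Real.pi := by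
    have : ∫ z in Metric.ball (0:ℂ) 1, ‖F z‖ ^ 2
        ≤ ∫ z in Metric.ball (0:ℂ) 1, (2 * (‖F z‖ - 1) ^ 2 + 2) := by
      refine setIntegral_mono (intBall hcF2 _ _) (intBall (by fun_prop) _ _) (fun z => ?_)
      nlinarith [sq_nonneg (‖F z‖ - 2)]
    rw [integral_add (intBall (by fun_prop) _ _) (intBall (by fun_prop) _ _),
      integral_const_mul, area_one _ one_pos] at this
    linarith
  rcases le_or_gt ε I with hcase | hcase
  · have h1 := deriv_sq_le hF (r := 1 / 2) (B := 2 * I + 2 * Real.pi) (by norm_num)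
      (by norm_num; exact hL2)
    have h2 : Real.pi ≤ Real.pi / ε * I := by
      rw [div_mul_eq_mul_div, le_div_iff₀ hε0]; gcongr
    calc ‖deriv F 0‖ ^ 2 ≤ _ := h1
      _ = 32 / Real.pi * (I + Real.pi) := by field_simp; ring
      _ ≤ 32 / Real.pi * (I + Real.pi / ε * I) := by gcongr
      _ ≤ _ := by
        have : 0 ≤ 320 * 4 / Real.pi * I := by positivity
        linarith
  · have hI1 : I ≤ 1 := by
      have := Real.pi_le_four
      rw [hε] at hcase; linarith

    have hsup : ∀ z : ℂ, ‖z‖ ≤ 3 / 4 → ‖F z‖ ≤ 7 := by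
      intro z hz
      have h1 := area_sq_le (c := z) (s := 1 / 4) (by norm_num) hF
      have h2 := ball_mono (f := fun z => ‖F z‖ ^ 2) (c := z) (d := 0) (s := 1 / 4) (t := 1)
        hcF2 (fun z => by positivity) (by simp; linarith)
      have h3 : Real.pi * (1 / 4) ^ 2 * ‖F z‖ ^ 2 ≤ 2 + 2 * Real.pi := by linarith
      by_contra! hcon
      have h4 : 49 < ‖F z‖ ^ 2 := by nlinarith
      have := Real.pi_gt_three
      nlinarith

    have hlow : ∀ z : ℂ, ‖z‖ ≤ 1 / 2 → 1 / 2 ≤ ‖F z‖ := by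
      intro w hw
      by_contra! hcon
      have hmaps : Set.MapsTo F (Metric.ball w (1 / 4)) (Metric.closedBall (F w) 15) := by
        intro z hz
        rw [Metric.mem_closedBall]
        rw [Metric.mem_ball, dist_eq_norm] at *
        have h1 : ‖z‖ ≤ 3 / 4 := by
          have := norm_add_le (z - w) w
          rw [sub_add_cancel] at this; linarith
        have := norm_sub_le (F z) (F w)
        linarith [hsup z h1]
      have h2 : ∀ z ∈ Metric.ball w (1 / 240), (1 / 16 : ℝ) ≤ (‖F z‖ - 1) ^ 2 := by
        intro z hz
        have h3 := Complex.dist_le_div_mul_dist_of_mapsTo_ball hF.differentiableOn hmaps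
          (Metric.ball_subset_ball (by norm_num) hz)
        rw [Metric.mem_ball] at hz
        rw [dist_eq_norm] at h3
        have h4 : ‖F z‖ ≤ 3 / 4 := by
          have := norm_add_le (F z - F w) (F w)
          rw [sub_add_cancel] at this
          linarith
        nlinarith
      have h3 : ∫ z in Metric.ball w (1 / 240), (1 / 16 : ℝ)
          ≤ ∫ z in Metric.ball w (1 / 240), (‖F z‖ - 1) ^ 2 :=
        setIntegral_mono_on (intBall continuous_const _ _) (intBall hcv _ _)
          Metric.isOpen_ball.measurableSet h2
      rw [area_one _ (by norm_num)] at h3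
      have h4 := ball_mono (c := w) (d := 0) (s := 1 / 240) (t := 1) hcv
        (fun z => by positivity) (by simp; linarith)
      rw [hε] at hcase
      linarith

    set D := Metric.ball (0:ℂ) (1 / 2) with hD
    set c0 := F 0 with hc0
    set A := Real.pi * (1 / 2 : ℝ) ^ 2 with hA
    have hA0 : 0 < A := by positivity
    set a := ∫ z in D, (‖F z‖ - 1) with ha
    set b := ∫ z in D, (‖F z‖ - 1) ^ 2 with hb
    have hbI : b ≤ I := ball_mono hcv (fun z => by positivity) (by norm_num)
    have hb0 : 0 ≤ b := integral_nonneg fun z => by positivity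
    have hne : ∀ z ∈ Metric.closedBall (0:ℂ) (1 / 2), F z ≠ 0 := by
      intro z hz h
      have := hlow z (by simpa using hz)
      rw [h] at this; norm_num at this
    have hc0pos : 0 < ‖c0‖ := lt_of_lt_of_le (by norm_num) (hlow 0 (by norm_num))
    have hcinv : ContinuousOn (fun z => (F z)⁻¹) (Metric.closedBall (0:ℂ) (1 / 2)) :=
      hcF.continuousOn.inv₀ hne
    have hinv := area_norm_le (H := fun z => (F z)⁻¹) (c := 0) (s := 1 / 2) (by norm_num)
      hcinv
      (hF.differentiableOn.inv (fun z hz => hne z (Metric.ball_subset_closedBall hz)))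
    have hinv2 : ∫ z in D, ‖(F z)⁻¹‖ ≤ ∫ z in D, (1 - (‖F z‖ - 1) + 2 * (‖F z‖ - 1) ^ 2) := by
      refine setIntegral_mono_on ?_ (intBall (by fun_prop) _ _)
          Metric.isOpen_ball.measurableSet ?_
      · exact (hcinv.norm.integrableOn_compact (isCompact_closedBall _ _)).mono_set
          Metric.ball_subset_closedBall
      · intro z hz
        have h1 := hlow z (by
          have := Metric.ball_subset_closedBall hz
          simpa using this)
        rw [norm_inv, inv_le_iff_one_le_mul₀ (by linarith)]
        nlinarith [mul_nonneg (sq_nonneg (‖F z‖ - 1)) (by linarith : 0 ≤ 2 * ‖F z‖ - 1)]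
    rw [integral_add (intBall (by fun_prop) _ _) (intBall (by fun_prop) _ _),
      integral_sub (intBall (by fun_prop) _ _) (intBall (by fun_prop) _ _),
      integral_const_mul, area_one _ (by norm_num), ← ha, ← hb, ← hA] at hinv2
    rw [← hA, norm_inv, ← hc0] at hinv

    have hF2 : ∫ z in D, ‖F z‖ ^ 2 = A + 2 * a + b := by
      have : ∀ z, ‖F z‖ ^ 2 = (1 + 2 * (‖F z‖ - 1)) + (‖F z‖ - 1) ^ 2 := fun z => by ring
      simp_rw [this]
      rw [integral_add (intBall (by fun_prop) _ _) (intBall (by fun_prop) _ _),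
        integral_add (intBall (by fun_prop) _ _) (intBall (by fun_prop) _ _),
        integral_const_mul, area_one _ (by norm_num), ← ha, ← hb, ← hA, mul_one]
    have hmv := area_mean_value (H := F) (c := 0) (s := 1 / 2) (by norm_num)
      hcF.continuousOn hF.differentiableOn
    rw [← hA, ← hD, ← hc0] at hmv
    have hre : ∫ z in D, (starRingEnd ℂ c0 * F z).re = A * ‖c0‖ ^ 2 := by
      have h1 := integral_re (𝕜 := ℂ) (μ := volume.restrict D)
        (f := fun z => starRingEnd ℂ c0 * F z) (intBall (by fun_prop) _ _)
      simp only [RCLike.re_to_complex] at h1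
      rw [h1, integral_const_mul, hmv, mul_left_comm, Complex.conj_mul']
      norm_cast
    have hG2 : ∫ z in D, ‖F z - c0‖ ^ 2 = (∫ z in D, ‖F z‖ ^ 2) - A * ‖c0‖ ^ 2 := by
      have : ∀ z, ‖F z - c0‖ ^ 2
          = (‖F z‖ ^ 2 - 2 * (starRingEnd ℂ c0 * F z).re) + ‖c0‖ ^ 2 := by
        intro z
        simp only [← Complex.normSq_eq_norm_sq, Complex.normSq_apply, Complex.sub_re,
          Complex.sub_im, Complex.mul_re, Complex.conj_re, Complex.conj_im]
        ring
      simp_rw [this]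
      have hcre : Continuous fun z => (starRingEnd ℂ c0 * F z).re :=
        Complex.continuous_re.comp (by fun_prop)
      rw [integral_add (intBall (by fun_prop) _ _) (intBall (by fun_prop) _ _),
        integral_sub (intBall (by fun_prop) _ _) (intBall (by fun_prop) _ _),
        integral_const_mul, area_one _ (by norm_num), hre, ← hA]
      ring
    have hfin : ∫ z in D, ‖F z - c0‖ ^ 2 ≤ 5 * b := by
      rw [hG2, hF2]

      have h1 : A ≤ ‖c0‖ * (A - (a - 2 * b)) := by
        have : A * ‖c0‖⁻¹ ≤ A - a + 2 * b := by linarith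
        rw [← div_eq_mul_inv, div_le_iff₀ hc0pos] at this
        linarith
      set x := a - 2 * b with hx
      have hAx : 0 < A - x := by
        by_contra! hcon
        nlinarith
      have h2 : A + 2 * x ≤ A * ‖c0‖ ^ 2 := by
        rcases le_or_gt (A + 2 * x) 0 with h | h
        · exact h.trans (by positivity)
        · have h3 : A + x ≤ A * ‖c0‖ := by
            have : (A + x) * (A - x) ≤ A * ‖c0‖ * (A - x) := by nlinarith [sq_nonneg x]
            exact le_of_mul_le_mul_right this hAx
          have h4 : (A + x) ^ 2 ≤ (A * ‖c0‖) ^ 2 := by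
            gcongr
            nlinarith
          have : A * (A + 2 * x) ≤ A * (A * ‖c0‖ ^ 2) := by nlinarith [sq_nonneg x]
          exact le_of_mul_le_mul_left this hA0
      linarith
    have hd := deriv_sq_le (G := fun z => F z - c0) (by fun_prop) (r := 1 / 4) (B := 5 * b)
      (by norm_num) (by norm_num; exact hfin)
    rw [deriv_sub_const] at hd
    calc ‖deriv F 0‖ ^ 2 ≤ _ := hd
      _ = 320 * 4 / Real.pi * b := by field_simp; ring
      _ ≤ 320 * 4 / Real.pi * I := by gcongr
      _ ≤ _ := by
        have : 0 ≤ 32 / Real.pi * (1 + Real.pi / ε) * I := by positivity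
        linarith

lemma ball_rescale {f : ℂ → ℝ} (c : ℂ) {s : ℝ} (hs : 0 < s) :
    s ^ 2 * ∫ z in Metric.ball (0:ℂ) 1, f (c + s * z) = ∫ z in Metric.ball c s, f z := by
  have h := Measure.integral_comp_smul (volume : Measure ℂ)
    (fun z => (Metric.ball c s).indicator f (c + z)) s
  rw [integral_add_left_eq_self (fun z => (Metric.ball c s).indicator f z),
    integral_indicator Metric.isOpen_ball.measurableSet, Complex.finrank_real_complex] at h
  rw [← integral_indicator Metric.isOpen_ball.measurableSet]
  have h2 : (Metric.ball (0:ℂ) 1).indicator (fun z => f (c + s * z))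
      = fun z => (Metric.ball c s).indicator f (c + s • z) := by
    ext z
    by_cases hz : ‖z‖ < 1
    · rw [Set.indicator_of_mem (by simpa using hz), Set.indicator_of_mem]
      · simp
      · simp [abs_of_pos hs]; nlinarith
    · rw [Set.indicator_of_notMem (by simpa using hz), Set.indicator_of_notMem]
      simp [abs_of_pos hs]; nlinarith
  rw [h2, h, abs_of_pos (by positivity), smul_eq_mul]
  field_simp

lemma local_scaled : ∃ C : ℝ, 0 < C ∧ ∀ F : ℂ → ℂ, Differentiable ℂ F → ∀ (c : ℂ) (s : ℝ), 0 < s →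
    ENNReal.ofReal (‖deriv F c‖ ^ 2) ≤ ENNReal.ofReal (C / s ^ 4) *
      ∫⁻ z in Metric.ball c s, ENNReal.ofReal ((‖F z‖ - 1) ^ 2) := by
  obtain ⟨C, hC, h⟩ := local_unit
  refine ⟨C, hC, fun F hF c s hs => ?_⟩
  have h1 := h (fun z => F (c + s * z)) (by fun_prop)
  have hder : deriv (fun z => F (c + s * z)) 0 = s * deriv F c := by
    have h2 : HasDerivAt (fun z : ℂ => c + s * z) (s : ℂ) 0 := by
      simpa using ((hasDerivAt_id (0:ℂ)).const_mul (s:ℂ)).const_add c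
    have h3 : HasDerivAt F (deriv F c) (c + s * 0) := by
      simpa using (hF c).hasDerivAt
    have := (h3.comp (0:ℂ) h2).deriv
    rw [mul_comm] at this
    exact this
  have hcv : Continuous (fun z => (‖F z‖ - 1) ^ 2) := by
    have := hF.continuous
    fun_prop
  rw [← ofReal_integral_eq_lintegral_ofReal (intBall hcv c s)
    (Filter.Eventually.of_forall fun z => by positivity), ← ENNReal.ofReal_mul (by positivity)]
  apply ENNReal.ofReal_le_ofReal
  rw [hder, norm_mul, Complex.norm_real, Real.norm_of_nonneg hs.le] at h1
  have h2 := ball_rescale (f := fun z => (‖F z‖ - 1) ^ 2) c hs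
  rw [← h2, div_mul_eq_mul_div, le_div_iff₀ (by positivity)]
  nlinarith [mul_le_mul_of_nonneg_left h1 (sq_nonneg s)]

lemma hardy_interval {g g' : ℝ → ℂ} (hg : ∀ r, HasDerivAt g (g' r) r) (hc : Continuous g')
    (h0 : g 0 = 0) {R : ℝ} (hR : 0 ≤ R) :
    ∫ r in (0:ℝ)..R, (1 + r) * Real.exp (-r ^ 2) * ‖g r‖ ^ 2
      ≤ ∫ r in (0:ℝ)..R, 16 * (Real.exp (-r ^ 2) / (1 + r) * ‖g' r‖ ^ 2) := by
  have hgc : Continuous g := continuous_iff_continuousAt.2 fun r => (hg r).continuousAt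
  let ψ : ℝ → ℝ := fun r => Real.exp (-r ^ 2) * (1 + Real.exp (-r))
  let ψ' : ℝ → ℝ := fun r => Real.exp (-r ^ 2) * (-(2 * r)) * (1 + Real.exp (-r))
    + Real.exp (-r ^ 2) * (-Real.exp (-r))
  have hψ : ∀ r, HasDerivAt ψ (ψ' r) r := by
    intro r
    have h1 : HasDerivAt (fun r : ℝ => Real.exp (-r ^ 2)) (Real.exp (-r ^ 2) * (-(2 * r))) r := by
      have := ((hasDerivAt_pow 2 r).neg).exp
      simpa using this
    have h2 : HasDerivAt (fun r : ℝ => 1 + Real.exp (-r)) (-Real.exp (-r)) r := by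
      have := ((hasDerivAt_id r).neg.exp).const_add 1
      simpa using this
    exact h1.mul h2
  have hN : ∀ r, HasDerivAt (fun r => ‖g r‖ ^ 2) (2 * inner ℝ (g r) (g' r)) r :=
    fun r => (hg r).norm_sq
  have hP : ∀ r, HasDerivAt (fun r => ‖g r‖ ^ 2 * ψ r)
      (2 * inner ℝ (g r) (g' r) * ψ r + ‖g r‖ ^ 2 * ψ' r) r := fun r => (hN r).mul (hψ r)
  have hψc : Continuous ψ := by fun_prop
  have hψc' : Continuous ψ' := by fun_prop
  have hcont : Continuous fun r => 2 * inner ℝ (g r) (g' r) * ψ r + ‖g r‖ ^ 2 * ψ' r := by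
    fun_prop
  have hFTC := intervalIntegral.integral_eq_sub_of_hasDerivAt (a := 0) (b := R)
    (fun r _ => hP r) (hcont.intervalIntegrable _ _)
  have hpos : 0 ≤ ∫ r in (0:ℝ)..R, (2 * inner ℝ (g r) (g' r) * ψ r + ‖g r‖ ^ 2 * ψ' r) := by
    rw [hFTC, h0]
    simp only [norm_zero]
    have : 0 ≤ ‖g R‖ ^ 2 * ψ R := by positivity
    linarith
  have hc1 : ContinuousOn (fun r : ℝ => Real.exp (-r ^ 2) / (1 + r) * ‖g' r‖ ^ 2)
      (Set.uIcc 0 R) := by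
    rw [Set.uIcc_of_le hR]
    refine ContinuousOn.mul (ContinuousOn.div (by fun_prop) (by fun_prop) ?_) (by fun_prop)
    intro r hr
    have := hr.1
    positivity
  have hi1 : IntervalIntegrable
      (fun r => 16 * (Real.exp (-r ^ 2) / (1 + r) * ‖g' r‖ ^ 2)) volume 0 R :=
    (hc1.intervalIntegrable).const_mul 16
  have hi2 : IntervalIntegrable (fun r => (1 + r) * Real.exp (-r ^ 2) * ‖g r‖ ^ 2) volume 0 R := by
    apply Continuous.intervalIntegrable; fun_prop
  have hi3 := hcont.intervalIntegrable (μ := volume) 0 R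
  have key := intervalIntegral.integral_mono_on hR (hi3.const_mul 2) (hi1.sub hi2) (by
    intro r hr
    have hr0 := hr.1
    have hE := Real.exp_pos (-r ^ 2)
    set E := Real.exp (-r ^ 2) with hEdef
    have he1 : Real.exp (-r) ≤ 1 := Real.exp_le_one_iff.2 (by linarith)
    have he2 : 1 - r ≤ Real.exp (-r) := by linarith [Real.add_one_le_exp (-r)]
    have he0 := Real.exp_pos (-r)
    have hψ2 : ψ r ≤ 2 * E := by
      show E * (1 + Real.exp (-r)) ≤ _
      nlinarith
    have hψ0 : 0 ≤ ψ r := by positivity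
    have hψ'2 : ψ' r ≤ -((1 + r) * E) := by
      show E * (-(2 * r)) * (1 + Real.exp (-r)) + E * (-Real.exp (-r)) ≤ _
      have : 0 ≤ E * (2 * r * Real.exp (-r) + (Real.exp (-r) - (1 - r))) := by
        apply mul_nonneg hE.le
        have : 0 ≤ 2 * r * Real.exp (-r) := by positivity
        linarith
      nlinarith
    have hin : inner ℝ (g r) (g' r) ≤ ‖g r‖ * ‖g' r‖ := real_inner_le_norm _ _
    have hs : 2 * inner ℝ (g r) (g' r) * ψ r ≤ 4 * E * (‖g r‖ * ‖g' r‖) := by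
      have h1 : inner ℝ (g r) (g' r) * ψ r ≤ ‖g r‖ * ‖g' r‖ * ψ r := by gcongr
      have h2 : ‖g r‖ * ‖g' r‖ * ψ r ≤ ‖g r‖ * ‖g' r‖ * (2 * E) := by gcongr
      linarith
    have ht : ‖g r‖ ^ 2 * ψ' r ≤ ‖g r‖ ^ 2 * (-((1 + r) * E)) := by gcongr
    have hq : 8 * (‖g r‖ * ‖g' r‖) ≤ (1 + r) * ‖g r‖ ^ 2 + 16 * (‖g' r‖ ^ 2 / (1 + r)) := by
      have h1r : 0 < 1 + r := by linarith
      have : (1 + r) * ‖g r‖ ^ 2 + 16 * (‖g' r‖ ^ 2 / (1 + r)) - 8 * (‖g r‖ * ‖g' r‖)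
          = ((1 + r) * ‖g r‖ - 4 * ‖g' r‖) ^ 2 / (1 + r) := by
        field_simp; ring
      have h2 : 0 ≤ ((1 + r) * ‖g r‖ - 4 * ‖g' r‖) ^ 2 / (1 + r) := by positivity
      linarith
    have hq2 := mul_le_mul_of_nonneg_left hq hE.le
    have : E / (1 + r) * ‖g' r‖ ^ 2 = E * (‖g' r‖ ^ 2 / (1 + r)) := by ring
    rw [this]
    nlinarith)
  rw [intervalIntegral.integral_const_mul, intervalIntegral.integral_sub hi1 hi2] at key
  linarith

lemma hardy_lintegral {g g' : ℝ → ℂ} (hg : ∀ r, HasDerivAt g (g' r) r) (hc : Continuous g')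
    (h0 : g 0 = 0) :
    ∫⁻ r in Set.Ioi (0:ℝ), ENNReal.ofReal ((1 + r) * Real.exp (-r ^ 2) * ‖g r‖ ^ 2)
      ≤ ∫⁻ r in Set.Ioi (0:ℝ),
        ENNReal.ofReal (16 * (Real.exp (-r ^ 2) / (1 + r) * ‖g' r‖ ^ 2)) := by
  have hgc : Continuous g := continuous_iff_continuousAt.2 fun r => (hg r).continuousAt
  have hU : Set.Ioi (0:ℝ) = ⋃ n : ℕ, Set.Ioc (0:ℝ) n := by
    ext x
    simp only [Set.mem_Ioi, Set.mem_iUnion, Set.mem_Ioc, exists_and_left]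
    exact ⟨fun h => ⟨h, exists_nat_ge x⟩, fun h => h.1⟩
  have hdir : Directed (· ⊆ ·) fun n : ℕ => Set.Ioc (0:ℝ) n :=
    (monotone_nat_of_le_succ fun n => Set.Ioc_subset_Ioc_right (by simp)).directed_le
  conv_lhs => rw [hU]
  rw [setLIntegral_iUnion_of_directed _ hdir]
  refine iSup_le fun n => ?_
  refine le_trans ?_ (lintegral_mono_set (fun x hx => hx.1 : Set.Ioc (0:ℝ) n ⊆ Set.Ioi 0))
  have hn : (0:ℝ) ≤ n := n.cast_nonneg
  have h := hardy_interval hg hc h0 hn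
  rw [intervalIntegral.integral_of_le hn, intervalIntegral.integral_of_le hn] at h
  rw [← ofReal_integral_eq_lintegral_ofReal, ← ofReal_integral_eq_lintegral_ofReal]
  · exact ENNReal.ofReal_le_ofReal h
  · refine IntegrableOn.mono_set (t := Set.Icc (0:ℝ) n) ?_ Set.Ioc_subset_Icc_self
    refine ContinuousOn.integrableOn_compact isCompact_Icc ?_
    refine continuousOn_const.mul
      (ContinuousOn.mul (ContinuousOn.div (by fun_prop) (by fun_prop) ?_) (by fun_prop))
    intro r hr
    have := hr.1
    positivity
  · filter_upwards [ae_restrict_mem measurableSet_Ioc] with r hr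
    have := hr.1
    positivity
  · refine IntegrableOn.mono_set (t := Set.Icc (0:ℝ) n) ?_ Set.Ioc_subset_Icc_self
    refine Continuous.continuousOn ?_ |>.integrableOn_compact isCompact_Icc
    fun_prop
  · filter_upwards [ae_restrict_mem measurableSet_Ioc] with r hr
    have := hr.1
    positivity

lemma polar_lintegral {f : ℂ → ENNReal} (hf : Measurable f) :
    ∫⁻ z, f z = ∫⁻ θ in Set.Ioo (-Real.pi) Real.pi, ∫⁻ r in Set.Ioi (0:ℝ),
      ENNReal.ofReal r * f (circleMap 0 r θ) := by
  rw [← Complex.lintegral_comp_polarCoord_symm, polarCoord_target, Measure.volume_eq_prod,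
    ← Measure.prod_restrict]
  simp only [smul_eq_mul]
  have : ∀ p : ℝ × ℝ, Complex.polarCoord.symm p = circleMap 0 p.1 p.2 := fun p => by
    rw [← polar_eq_circleMap, zero_add]
  simp_rw [this]
  rw [lintegral_prod_symm]
  refine Measurable.aemeasurable ?_
  refine (ENNReal.measurable_ofReal.comp measurable_fst).mul (hf.comp ?_)
  have : Continuous fun p : ℝ × ℝ => circleMap 0 p.1 p.2 := by
    unfold circleMap; fun_prop
  exact this.measurable

lemma hardy_plane {F : ℂ → ℂ} (hF : Differentiable ℂ F) :
    ∫⁻ z, ENNReal.ofReal (‖F z - F 0‖ ^ 2 * Real.exp (-‖z‖ ^ 2))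
      ≤ ∫⁻ z, ENNReal.ofReal (16 * (Real.exp (-‖z‖ ^ 2) / (‖z‖ * (1 + ‖z‖)) * ‖deriv F z‖ ^ 2)) := by
  have hcF := hF.continuous
  have hcd : Continuous (deriv F) := hF.contDiff.continuous_deriv (le_refl 1)
  rw [polar_lintegral (by fun_prop), polar_lintegral (by fun_prop)]
  refine lintegral_mono fun θ => ?_
  set e : ℂ := Complex.exp (θ * Complex.I) with he
  have hne : ‖e‖ = 1 := Complex.norm_exp_ofReal_mul_I θ
  have hcm : ∀ r : ℝ, circleMap 0 r θ = r * e := fun r => by simp [circleMap, he]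
  have h := hardy_lintegral (g := fun r => F (r * e) - F 0) (g' := fun r => deriv F (r * e) * e)
    (fun r => by
      have h1 : HasDerivAt (fun r : ℝ => (r : ℂ) * e) e r := by
        simpa using (Complex.ofRealCLM.hasDerivAt (x := r)).mul_const e
      exact ((hF (r * e)).hasDerivAt.comp r h1).sub_const _)
    (by fun_prop) (by simp)
  refine le_trans ?_ (h.trans ?_)
  · refine setLIntegral_mono (by fun_prop) fun r hr => ?_
    have hr0 : 0 < r := hr
    rw [← ENNReal.ofReal_mul hr0.le]
    apply ENNReal.ofReal_le_ofReal
    rw [hcm, norm_mul, hne, Complex.norm_real, Real.norm_of_nonneg hr0.le, mul_one]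
    have : 0 ≤ Real.exp (-r ^ 2) * ‖F (r * e) - F 0‖ ^ 2 := by positivity
    nlinarith
  · refine setLIntegral_mono' measurableSet_Ioi fun r hr => ?_
    have hr0 : 0 < r := hr
    rw [← ENNReal.ofReal_mul hr0.le]
    apply ENNReal.ofReal_le_ofReal
    rw [hcm, norm_mul, norm_mul, hne, Complex.norm_real, Real.norm_of_nonneg hr0.le, mul_one,
      mul_one]
    apply le_of_eq
    field_simp

/-- the singular weight near the origin -/
noncomputable def singW (z : ℂ) : ℝ := (Metric.ball (0:ℂ) 1).indicator (fun z => 8 / ‖z‖) z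

lemma singW_nonneg (z : ℂ) : 0 ≤ singW z := Set.indicator_nonneg (fun z _ => by positivity) z

lemma singW_meas : Measurable singW :=
  Measurable.indicator (by fun_prop) Metric.isOpen_ball.measurableSet

lemma singW_finite : ∫⁻ z, ENNReal.ofReal (singW z) < ⊤ := by
  rw [polar_lintegral (f := fun z => ENNReal.ofReal (singW z)) singW_meas.ennreal_ofReal]
  have h1 : ∀ θ : ℝ, ∫⁻ r in Set.Ioi (0:ℝ), ENNReal.ofReal r * ENNReal.ofReal
      (singW (circleMap 0 r θ)) ≤ 8 := by
    intro θ
    have : ∫⁻ r in Set.Ioi (0:ℝ), ENNReal.ofReal r * ENNReal.ofReal (singW (circleMap 0 r θ))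
        ≤ ∫⁻ r in Set.Ioi (0:ℝ), (Set.Ioo (0:ℝ) 1).indicator (fun _ => 8) r := by
      refine setLIntegral_mono' measurableSet_Ioi fun r hr => ?_
      have hr0 : 0 < r := hr
      unfold singW
      by_cases h : r < 1
      · rw [Set.indicator_of_mem (by simpa [abs_of_pos hr0] using h),
          Set.indicator_of_mem (show r ∈ Set.Ioo (0:ℝ) 1 from ⟨hr0, h⟩),
          ← ENNReal.ofReal_mul hr0.le]
        simp only [norm_circleMap_zero, abs_of_pos hr0]
        rw [mul_div_cancel₀ _ hr0.ne']
        simp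
      · rw [Set.indicator_of_notMem (by simpa [abs_of_pos hr0] using h)]
        simp
    refine this.trans ((setLIntegral_le_lintegral _ _).trans ?_)
    rw [lintegral_indicator measurableSet_Ioo]
    simp
  refine lt_of_le_of_lt (lintegral_mono h1) ?_
  rw [setLIntegral_const, Real.volume_Ioo]
  exact ENNReal.mul_lt_top (by simp) ENNReal.ofReal_lt_top

lemma weight_bound {z w : ℂ} (h : ‖w - z‖ < 1 / (1 + ‖z‖)) :
    Real.exp (-‖z‖ ^ 2) / (‖z‖ * (1 + ‖z‖)) * (1 + ‖z‖) ^ 4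
      ≤ Real.exp (-‖w‖ ^ 2) * (Real.exp 3 * (8 * (1 + ‖w‖) ^ 2 + singW z)) ∧
    ‖z - w‖ < 2 / (1 + ‖w‖) := by
  have hz := norm_nonneg z
  have hw := norm_nonneg w
  have h1z : 0 < 1 + ‖z‖ := by linarith
  have h1w : 0 < 1 + ‖w‖ := by linarith
  have hd : ‖w - z‖ * (1 + ‖z‖) < 1 := by rwa [lt_div_iff₀ h1z] at h
  have hd0 := norm_nonneg (w - z)
  have hd1 : ‖w - z‖ < 1 := by nlinarith
  have hwz : ‖w‖ ≤ ‖z‖ + ‖w - z‖ := by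
    have := norm_add_le z (w - z)
    rwa [add_sub_cancel] at this
  have hzw : ‖z‖ ≤ ‖w‖ + ‖w - z‖ := by
    have := norm_sub_le w (w - z)
    rwa [sub_sub_cancel] at this
  have hexp : Real.exp (-‖z‖ ^ 2) ≤ Real.exp (-‖w‖ ^ 2) * Real.exp 3 := by
    rw [← Real.exp_add]
    apply Real.exp_le_exp.2
    have : ‖w‖ ^ 2 ≤ (‖z‖ + ‖w - z‖) ^ 2 := by gcongr
    nlinarith
  constructor
  · have hs := singW_nonneg z
    have hq : (1 + ‖z‖) ^ 4 / (‖z‖ * (1 + ‖z‖)) ≤ 8 * (1 + ‖w‖) ^ 2 + singW z := by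
      rcases hz.eq_or_lt with h0 | h0
      · rw [← h0]; simp; positivity
      have hq1 : (1 + ‖z‖) ^ 4 / (‖z‖ * (1 + ‖z‖)) = (1 + ‖z‖) ^ 3 / ‖z‖ := by
        field_simp
      rw [hq1]
      by_cases h1 : ‖z‖ < 1
      · have : singW z = 8 / ‖z‖ := by
          unfold singW
          rw [Set.indicator_of_mem (by simpa using h1)]
        rw [this]
        have h2 : (1 + ‖z‖) ^ 3 / ‖z‖ ≤ 8 / ‖z‖ := by
          gcongr
          have : (1 + ‖z‖) ^ 3 ≤ 2 ^ 3 := by gcongr; linarith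
          linarith
        have : 0 ≤ 8 * (1 + ‖w‖) ^ 2 := by positivity
        linarith
      · push Not at h1
        have h2 : (1 + ‖z‖) ^ 3 / ‖z‖ ≤ 2 * (1 + ‖z‖) ^ 2 := by
          rw [div_le_iff₀ h0]
          nlinarith [sq_nonneg (1 + ‖z‖), mul_nonneg (sq_nonneg (1 + ‖z‖)) (by linarith : 0 ≤ ‖z‖ - 1)]
        have h3 : (1 + ‖z‖) ^ 2 ≤ (2 * (1 + ‖w‖)) ^ 2 := by gcongr; linarith
        nlinarith
    calc Real.exp (-‖z‖ ^ 2) / (‖z‖ * (1 + ‖z‖)) * (1 + ‖z‖) ^ 4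
        = Real.exp (-‖z‖ ^ 2) * ((1 + ‖z‖) ^ 4 / (‖z‖ * (1 + ‖z‖))) := by ring
      _ ≤ (Real.exp (-‖w‖ ^ 2) * Real.exp 3) * (8 * (1 + ‖w‖) ^ 2 + singW z) := by gcongr
      _ = _ := by ring
  · rw [norm_sub_rev, lt_div_iff₀ h1w]
    nlinarith

lemma main_bound : ∃ K : ENNReal, K < ⊤ ∧ ∀ F : ℂ → ℂ, Differentiable ℂ F →
    ∫⁻ z, ENNReal.ofReal (‖F z - F 0‖ ^ 2 * Real.exp (-‖z‖ ^ 2))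
      ≤ K * ∫⁻ z, ENNReal.ofReal ((‖F z‖ - 1) ^ 2 * Real.exp (-‖z‖ ^ 2)) := by
  obtain ⟨C, hC, hloc⟩ := local_scaled
  set S := ∫⁻ z, ENNReal.ofReal (singW z) with hS
  have hSf : S < ⊤ := singW_finite
  set K := ENNReal.ofReal (16 * C * Real.exp 3) * (ENNReal.ofReal (32 * Real.pi) + S) with hK
  refine ⟨K, ?_, fun F hF => ?_⟩
  · exact ENNReal.mul_lt_top ENNReal.ofReal_lt_top (ENNReal.add_lt_top.2 ⟨ENNReal.ofReal_lt_top, hSf⟩)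
  have hcF := hF.continuous
  refine (hardy_plane hF).trans ?_
  let φ : ℂ → ENNReal := fun w => ENNReal.ofReal ((‖F w‖ - 1) ^ 2)
  have hφ : Measurable φ := by fun_prop
  let k : ℂ → ENNReal := fun z => ENNReal.ofReal
    (16 * C * (Real.exp (-‖z‖ ^ 2) / (‖z‖ * (1 + ‖z‖)) * (1 + ‖z‖) ^ 4))
  have hk : Measurable k := by fun_prop
  let T : Set (ℂ × ℂ) := {p | ‖p.2 - p.1‖ < 1 / (1 + ‖p.1‖)}
  have hT : MeasurableSet T := measurableSet_lt (by fun_prop) (by fun_prop)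
  have hstep1 : ∀ z, ENNReal.ofReal
      (16 * (Real.exp (-‖z‖ ^ 2) / (‖z‖ * (1 + ‖z‖)) * ‖deriv F z‖ ^ 2))
      ≤ ∫⁻ w, T.indicator (fun p => k p.1 * φ p.2) (z, w) := by
    intro z
    have h1z : 0 < 1 + ‖z‖ := by positivity
    have h1 := hloc F hF z (1 / (1 + ‖z‖)) (by positivity)
    rw [← mul_assoc, ENNReal.ofReal_mul (by positivity)]
    calc _ ≤ ENNReal.ofReal (16 * (Real.exp (-‖z‖ ^ 2) / (‖z‖ * (1 + ‖z‖)))) *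
          (ENNReal.ofReal (C / (1 / (1 + ‖z‖)) ^ 4) *
            ∫⁻ w in Metric.ball z (1 / (1 + ‖z‖)), φ w) := by gcongr
      _ = k z * ∫⁻ w in Metric.ball z (1 / (1 + ‖z‖)), φ w := by
          rw [← mul_assoc, ← ENNReal.ofReal_mul (by positivity)]
          congr 2
          field_simp
      _ = ∫⁻ w, T.indicator (fun p => k p.1 * φ p.2) (z, w) := by
          rw [← lintegral_const_mul _ hφ, ← lintegral_indicator Metric.isOpen_ball.measurableSet]
          congr 1 with w
          by_cases hw : ‖w - z‖ < 1 / (1 + ‖z‖)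
          · rw [Set.indicator_of_mem (by rwa [Metric.mem_ball, dist_eq_norm]),
              Set.indicator_of_mem (show (z, w) ∈ T from hw)]
          · rw [Set.indicator_of_notMem (by rwa [Metric.mem_ball, dist_eq_norm]),
              Set.indicator_of_notMem (show (z, w) ∉ T from hw)]
  refine (lintegral_mono hstep1).trans ?_
  rw [lintegral_lintegral_swap]
  swap
  · exact (Measurable.indicator (by fun_prop) hT).aemeasurable
  rw [← lintegral_const_mul _ (by fun_prop)]
  refine lintegral_mono fun w => ?_
  have h1w : 0 < 1 + ‖w‖ := by positivity
  have hstep2 : ∀ z, T.indicator (fun p => k p.1 * φ p.2) (z, w)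
      ≤ φ w * ENNReal.ofReal (Real.exp (-‖w‖ ^ 2)) * ENNReal.ofReal (16 * C * Real.exp 3) *
        ((Metric.ball w (2 / (1 + ‖w‖))).indicator
          (fun _ => ENNReal.ofReal (8 * (1 + ‖w‖) ^ 2)) z + ENNReal.ofReal (singW z)) := by
    intro z
    by_cases hz : (z, w) ∈ T
    · obtain ⟨h1, h2⟩ := weight_bound (z := z) (w := w) hz
      have hs := singW_nonneg z
      rw [Set.indicator_of_mem hz, Set.indicator_of_mem (by simpa [dist_eq_norm] using h2),
        mul_comm (k _), mul_assoc (φ w), mul_assoc (φ w)]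
      refine mul_le_mul' le_rfl ?_
      rw [← ENNReal.ofReal_mul (by positivity),
        ← ENNReal.ofReal_add (by positivity) hs, ← ENNReal.ofReal_mul (by positivity)]
      refine ENNReal.ofReal_le_ofReal ?_
      calc _ ≤ 16 * C * (Real.exp (-‖w‖ ^ 2) * (Real.exp 3 * (8 * (1 + ‖w‖) ^ 2 + singW z))) := by
            gcongr
        _ = _ := by ring
    · rw [Set.indicator_of_notMem hz]
      exact zero_le
  refine (lintegral_mono hstep2).trans ?_
  have hm : Measurable fun z => (Metric.ball w (2 / (1 + ‖w‖))).indicator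
      (fun _ => ENNReal.ofReal (8 * (1 + ‖w‖) ^ 2)) z + ENNReal.ofReal (singW z) :=
    (measurable_const.indicator Metric.isOpen_ball.measurableSet).add singW_meas.ennreal_ofReal
  rw [lintegral_const_mul _ hm,
    lintegral_add_right _ singW_meas.ennreal_ofReal, ← hS,
    lintegral_indicator Metric.isOpen_ball.measurableSet, setLIntegral_const, Complex.volume_ball]
  have hvol : ENNReal.ofReal (8 * (1 + ‖w‖) ^ 2) *
      (ENNReal.ofReal (2 / (1 + ‖w‖)) ^ 2 * (NNReal.pi : ENNReal)) = ENNReal.ofReal (32 * Real.pi) := by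
    rw [← ENNReal.ofReal_pow (by positivity),
      show (NNReal.pi : ENNReal) = ENNReal.ofReal Real.pi by
        rw [← NNReal.coe_real_pi, ENNReal.ofReal_coe_nnreal],
      ← ENNReal.ofReal_mul (by positivity), ← ENNReal.ofReal_mul (by positivity)]
    congr 1
    field_simp
    norm_num
  rw [hvol, ENNReal.ofReal_mul (by positivity : 0 ≤ (‖F w‖ - 1) ^ 2), hK]
  apply le_of_eq
  simp only [φ]
  ring

/-- **Local stable phase retrieval at 1 in the Bargmann–Fock space.**
There is an absolute constant `M > 0` such that every entire `F` with finite Fock norm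
satisfies `inf_{|λ|=1} ‖F − λ·1‖_F ≤ M ‖|F| − 1‖_F`. -/
theorem stmt0 :
    ∃ M : ℝ, 0 < M ∧
      ∀ F : ℂ → ℂ, Differentiable ℂ F →
        Integrable (fun z : ℂ => ‖F z‖ ^ 2 * Real.exp (-‖z‖ ^ 2)) →
        (⨅ θ : Metric.sphere (0 : ℂ) 1, fockNorm (fun z => F z - θ.1))
          ≤ M * fockNorm (fun z => ‖F z‖ - 1) := by
  obtain ⟨K, hK, hmain⟩ := main_bound
  refine ⟨Real.sqrt (6 * K.toReal + 4), by positivity, fun F hF hFint => ?_⟩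
  have hcF := hF.continuous
  have hgauss : Integrable (fun z : ℂ => Real.exp (-‖z‖ ^ 2)) := by
    by_contra hcon
    have := GaussianFourier.integral_rexp_neg_mul_sq_norm (V := ℂ) (b := 1) one_pos
    simp only [neg_mul, one_mul] at this
    rw [integral_undef hcon] at this
    simp at this
    exact Real.pi_ne_zero this.symm
  have hJ : Integrable (fun z : ℂ => (‖F z‖ - 1) ^ 2 * Real.exp (-‖z‖ ^ 2)) := by
    refine ((hFint.const_mul 2).add (hgauss.const_mul 2)).mono' (by fun_prop) ?_
    refine Filter.Eventually.of_forall fun z => ?_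
    have := Real.exp_pos (-‖z‖ ^ 2)
    rw [Real.norm_of_nonneg (by positivity)]
    simp only [Pi.add_apply]
    nlinarith [mul_nonneg (sq_nonneg (‖F z‖ + 1)) this.le]
  have hG : Integrable (fun z : ℂ => ‖F z - F 0‖ ^ 2 * Real.exp (-‖z‖ ^ 2)) := by
    refine ((hFint.const_mul 2).add (hgauss.const_mul (2 * ‖F 0‖ ^ 2))).mono' (by fun_prop) ?_
    refine Filter.Eventually.of_forall fun z => ?_
    have := Real.exp_pos (-‖z‖ ^ 2)
    rw [Real.norm_of_nonneg (by positivity)]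
    simp only [Pi.add_apply]
    have h1 : ‖F z - F 0‖ ^ 2 ≤ (‖F z‖ + ‖F 0‖) ^ 2 := by gcongr; exact norm_sub_le _ _
    have h2 : ‖F z - F 0‖ ^ 2 ≤ 2 * ‖F z‖ ^ 2 + 2 * ‖F 0‖ ^ 2 := by
      nlinarith [sq_nonneg (‖F z‖ - ‖F 0‖)]
    nlinarith [mul_le_mul_of_nonneg_right h2 this.le]
  have hb := hmain F hF
  rw [← ofReal_integral_eq_lintegral_ofReal hG (Filter.Eventually.of_forall fun z => by positivity),
    ← ofReal_integral_eq_lintegral_ofReal hJ (Filter.Eventually.of_forall fun z => by positivity),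
    ← ENNReal.ofReal_toReal hK.ne, ← ENNReal.ofReal_mul ENNReal.toReal_nonneg,
    ENNReal.ofReal_le_ofReal_iff (mul_nonneg ENNReal.toReal_nonneg
      (integral_nonneg fun z => by positivity))] at hb

  obtain ⟨t, ht, htF⟩ : ∃ t : ℂ, ‖t‖ = 1 ∧ ‖F 0 - t‖ = |‖F 0‖ - 1| := by
    by_cases h0 : F 0 = 0
    · exact ⟨1, by simp, by simp [h0]⟩
    · have hn : (‖F 0‖ : ℂ) ≠ 0 := by simpa using h0
      refine ⟨F 0 / ‖F 0‖, by simp [h0], ?_⟩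
      have : F 0 - F 0 / ‖F 0‖ = (F 0 / ‖F 0‖) * ((‖F 0‖ - 1 : ℝ) : ℂ) := by
        push_cast
        field_simp
      rw [this, norm_mul, Complex.norm_real]
      simp [h0]
  have hle : (⨅ θ : Metric.sphere (0 : ℂ) 1, fockNorm (fun z => F z - θ.1))
      ≤ fockNorm (fun z => F z - t) :=
    ciInf_le (f := fun θ : Metric.sphere (0 : ℂ) 1 => fockNorm (fun z => F z - θ.1))
      ⟨0, by rintro _ ⟨θ, rfl⟩; exact Real.sqrt_nonneg _⟩ ⟨t, by simpa using ht⟩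
  refine hle.trans ?_
  unfold fockNorm
  rw [← Real.sqrt_mul (by positivity)]
  apply Real.sqrt_le_sqrt
  have hfin : ∫ z : ℂ, ‖F z - t‖ ^ 2 * Real.exp (-‖z‖ ^ 2)
      ≤ ∫ z : ℂ, (6 * (‖F z - F 0‖ ^ 2 * Real.exp (-‖z‖ ^ 2))
        + 4 * ((‖F z‖ - 1) ^ 2 * Real.exp (-‖z‖ ^ 2))) := by
    refine integral_mono_of_nonneg (Filter.Eventually.of_forall fun z => by positivity)
      ((hG.const_mul 6).add (hJ.const_mul 4)) (Filter.Eventually.of_forall fun z => ?_)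
    have he := Real.exp_pos (-‖z‖ ^ 2)
    have h1 : ‖F z - t‖ ≤ ‖F z - F 0‖ + |‖F 0‖ - 1| := by
      rw [← htF]
      exact norm_sub_le_norm_sub_add_norm_sub _ _ _
    have h2 : |‖F 0‖ - 1| ≤ ‖F z - F 0‖ + |‖F z‖ - 1| := by
      have h3 : |‖F 0‖ - ‖F z‖| ≤ ‖F z - F 0‖ := by
        rw [norm_sub_rev]; exact abs_norm_sub_norm_le _ _
      exact (abs_sub_le _ (‖F z‖) _).trans (by linarith)
    have h4 : ‖F z - t‖ ^ 2 ≤ 6 * ‖F z - F 0‖ ^ 2 + 4 * (‖F z‖ - 1) ^ 2 := by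
      rw [← sq_abs (‖F z‖ - 1)]
      have ha := norm_nonneg (F z - F 0)
      have hb := abs_nonneg (‖F z‖ - 1)
      have h5 : ‖F z - t‖ ≤ 2 * ‖F z - F 0‖ + |‖F z‖ - 1| := by linarith
      have h6 : ‖F z - t‖ ^ 2 ≤ (2 * ‖F z - F 0‖ + |‖F z‖ - 1|) ^ 2 := by gcongr
      nlinarith [sq_nonneg (‖F z - F 0‖ - 2 * |‖F z‖ - 1|), sq_nonneg (‖F z - F 0‖ - |‖F z‖ - 1|)]
    have := mul_le_mul_of_nonneg_right h4 he.le
    simp only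
    linarith
  rw [integral_add (hG.const_mul 6) (hJ.const_mul 4), integral_const_mul, integral_const_mul] at hfin
  simp only [Real.norm_eq_abs, sq_abs]
  rw [mul_left_comm]
  gcongr
  linarith
end

section
/- Let δ = 1/4601 and M̃ = 23003. For every polynomial P : ℂ → ℂ with ‖P‖_F ≤ δ there exists w ∈ ℂ with |w| = 1 such that ‖w(1+P) − 1‖_F ≤ M̃ · ‖ |1+P| − 1 ‖_F. -/
open MeasureTheory

open ComplexConjugate

lemma rot_int (j k : ℕ) (hjk : j ≠ k) (g : ℝ → ℝ) :
    ∫ z : ℂ, z ^ j * conj z ^ k * (g ‖z‖ : ℂ) = 0 := by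
  have hne : ((j : ℝ) - k) ≠ 0 := by
    rw [sub_ne_zero]; exact_mod_cast hjk
  set t : ℝ := Real.pi / ((j : ℝ) - k) with ht
  set w : Circle := Circle.exp t with hw
  have key : (w : ℂ) ^ j * conj (w : ℂ) ^ k = -1 := by
    have h1 : conj (w : ℂ) = Complex.exp (-(t * Complex.I)) := by
      rw [hw, Circle.coe_exp, ← Complex.exp_conj]
      simp
    rw [h1, hw, Circle.coe_exp, ← Complex.exp_nat_mul, ← Complex.exp_nat_mul, ← Complex.exp_add]
    rw [← Complex.exp_pi_mul_I]
    congr 1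
    have : ((j : ℂ) - k) ≠ 0 := by
      rw [sub_ne_zero]; exact_mod_cast hjk
    rw [ht]; push_cast
    field_simp
    ring
  have hmp := (rotation w).measurePreserving
  have h2 := hmp.integral_comp (rotation w).toHomeomorph.measurableEmbedding
    (fun z : ℂ => z ^ j * conj z ^ k * (g ‖z‖ : ℂ))
  have h3 : (fun z : ℂ => (rotation w z) ^ j * conj (rotation w z) ^ k * (g ‖rotation w z‖ : ℂ))
      = fun z : ℂ => - (z ^ j * conj z ^ k * (g ‖z‖ : ℂ)) := by
    funext z
    rw [LinearIsometryEquiv.norm_map, rotation_apply, map_mul, mul_pow, mul_pow]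
    linear_combination (z ^ j * conj z ^ k * (g ‖z‖ : ℂ)) * key
  rw [h3, integral_neg] at h2
  have h4 := h2
  exact self_eq_neg.mp h2.symm

lemma mono_integrable (g : ℝ → ℝ) (hg : ∀ n : ℕ, Integrable (fun z : ℂ => ‖z‖ ^ n * g ‖z‖))
    (hm : Measurable g) (j k : ℕ) :
    Integrable (fun z : ℂ => z ^ j * conj z ^ k * (g ‖z‖ : ℂ)) := by
  refine (hg (j + k)).mono ?_ ?_
  · apply Measurable.aestronglyMeasurable
    have : Measurable (fun z : ℂ => g ‖z‖) := hm.comp measurable_norm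
    fun_prop
  · refine Filter.Eventually.of_forall fun z => ?_
    simp [pow_add]

lemma mono_diag (g : ℝ → ℝ) (k : ℕ) :
    ∫ z : ℂ, z ^ k * conj z ^ k * (g ‖z‖ : ℂ) = ((∫ z : ℂ, ‖z‖ ^ (2 * k) * g ‖z‖ : ℝ) : ℂ) := by
  rw [← integral_complex_ofReal]
  congr 1
  funext z
  rw [← mul_pow, Complex.mul_conj, Complex.normSq_eq_norm_sq]
  push_cast
  rw [← pow_mul]

/-- pairing against a monomial -/
lemma pair_int (Q : Polynomial ℂ) (g : ℝ → ℝ)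
    (hg : ∀ n : ℕ, Integrable (fun z : ℂ => ‖z‖ ^ n * g ‖z‖))
    (hm : Measurable g) (k : ℕ) :
    Integrable (fun z : ℂ => Q.eval z * conj z ^ k * (g ‖z‖ : ℂ)) ∧
    ∫ z : ℂ, Q.eval z * conj z ^ k * (g ‖z‖ : ℂ) =
      Q.coeff k * ((∫ z : ℂ, ‖z‖ ^ (2 * k) * g ‖z‖ : ℝ) : ℂ) := by
  induction Q using Polynomial.induction_on' with
  | add p q hp hq =>
    have e : (fun z : ℂ => (p + q).eval z * conj z ^ k * (g ‖z‖ : ℂ)) =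
      fun z : ℂ => p.eval z * conj z ^ k * (g ‖z‖ : ℂ) + q.eval z * conj z ^ k * (g ‖z‖ : ℂ) := by
      funext z; simp; ring
    rw [e]
    refine ⟨hp.1.add hq.1, ?_⟩
    rw [integral_add hp.1 hq.1, hp.2, hq.2, Polynomial.coeff_add]; ring
  | monomial n c =>
    have e : (fun z : ℂ => (Polynomial.monomial n c).eval z * conj z ^ k * (g ‖z‖ : ℂ)) =
      fun z : ℂ => c * (z ^ n * conj z ^ k * (g ‖z‖ : ℂ)) := by
      funext z; simp; ring
    rw [e]
    refine ⟨(mono_integrable g hg hm n k).const_mul c, ?_⟩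
    rw [integral_const_mul, Polynomial.coeff_monomial]
    split_ifs with h
    · subst h; rw [mono_diag]
    · rw [rot_int n k h]; simp

lemma pair_int2 (Q R : Polynomial ℂ) (g : ℝ → ℝ)
    (hg : ∀ n : ℕ, Integrable (fun z : ℂ => ‖z‖ ^ n * g ‖z‖))
    (hm : Measurable g) (N : ℕ) (hN : R.natDegree < N) :
    Integrable (fun z : ℂ => Q.eval z * conj (R.eval z) * (g ‖z‖ : ℂ)) ∧
    ∫ z : ℂ, Q.eval z * conj (R.eval z) * (g ‖z‖ : ℂ) =
      ∑ k ∈ Finset.range N, Q.coeff k * conj (R.coeff k) *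
        ((∫ z : ℂ, ‖z‖ ^ (2 * k) * g ‖z‖ : ℝ) : ℂ) := by
  have e : (fun z : ℂ => Q.eval z * conj (R.eval z) * (g ‖z‖ : ℂ)) =
      fun z : ℂ => ∑ k ∈ Finset.range N,
        conj (R.coeff k) * (Q.eval z * conj z ^ k * (g ‖z‖ : ℂ)) := by
    funext z
    rw [Polynomial.eval_eq_sum_range' hN, map_sum, Finset.mul_sum, Finset.sum_mul]
    refine Finset.sum_congr rfl fun k _ => ?_
    simp; ring
  rw [e]
  have hi : ∀ k ∈ Finset.range N, Integrable (fun z : ℂ =>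
      conj (R.coeff k) * (Q.eval z * conj z ^ k * (g ‖z‖ : ℂ))) := fun k _ =>
    ((pair_int Q g hg hm k).1).const_mul _
  refine ⟨integrable_finsetSum _ hi, ?_⟩
  rw [integral_finsetSum _ hi]
  refine Finset.sum_congr rfl fun k _ => ?_
  rw [integral_const_mul, (pair_int Q g hg hm k).2]; ring

lemma normsq_int (Q : Polynomial ℂ) (g : ℝ → ℝ)
    (hg : ∀ n : ℕ, Integrable (fun z : ℂ => ‖z‖ ^ n * g ‖z‖))
    (hm : Measurable g) (N : ℕ) (hN : Q.natDegree < N) :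
    Integrable (fun z : ℂ => ‖Q.eval z‖ ^ 2 * g ‖z‖) ∧
    ∫ z : ℂ, ‖Q.eval z‖ ^ 2 * g ‖z‖ =
      ∑ k ∈ Finset.range N, ‖Q.coeff k‖ ^ 2 * ∫ z : ℂ, ‖z‖ ^ (2 * k) * g ‖z‖ := by
  obtain ⟨h1, h2⟩ := pair_int2 Q Q g hg hm N hN
  have e : (fun z : ℂ => Q.eval z * conj (Q.eval z) * (g ‖z‖ : ℂ)) =
      fun z : ℂ => ((‖Q.eval z‖ ^ 2 * g ‖z‖ : ℝ) : ℂ) := by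
    funext z
    rw [Complex.mul_conj, Complex.normSq_eq_norm_sq]; push_cast; rfl
  rw [e] at h1 h2
  refine ⟨by simpa only [RCLike.re_to_complex, Complex.ofReal_re] using h1.re, ?_⟩
  rw [integral_complex_ofReal] at h2
  apply Complex.ofReal_injective
  rw [h2]
  push_cast
  refine Finset.sum_congr rfl fun k _ => ?_
  rw [Complex.mul_conj, Complex.normSq_eq_norm_sq]; push_cast; rfl

noncomputable def cut (ρ : ℝ) (t : ℝ) : ℝ := (Set.Iio ρ).indicator (fun _ => (1 : ℝ)) t

lemma cut_measurable (ρ : ℝ) : Measurable (cut ρ) :=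
  measurable_const.indicator measurableSet_Iio

lemma cut_nonneg (ρ t : ℝ) : 0 ≤ cut ρ t := Set.indicator_nonneg (fun _ _ => zero_le_one) _

lemma cut_eq {E : Type*} [NormedAddCommGroup E] [NormedSpace ℝ E] (ρ : ℝ) (φ : ℂ → E) :
    (fun z : ℂ => cut ρ ‖z‖ • φ z) = (Metric.ball (0 : ℂ) ρ).indicator φ := by
  funext z
  by_cases h : ‖z‖ < ρ <;> simp [cut, Set.indicator, h]

lemma cut_integrable (ρ : ℝ) (φ : ℂ → ℝ) (hφ : Continuous φ) :
    Integrable (fun z : ℂ => φ z * cut ρ ‖z‖) := by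
  have : (fun z : ℂ => φ z * cut ρ ‖z‖) = (Metric.ball (0 : ℂ) ρ).indicator φ := by
    rw [← cut_eq]; funext z; simp [mul_comm]
  rw [this, integrable_indicator_iff Metric.isOpen_ball.measurableSet]
  exact (hφ.continuousOn.integrableOn_compact (isCompact_closedBall (0 : ℂ) ρ)).mono_set
    Metric.ball_subset_closedBall

lemma cut_vol (ρ : ℝ) (hρ : 0 < ρ) : ∫ z : ℂ, cut ρ ‖z‖ = Real.pi * ρ ^ 2 := by
  have : (fun z : ℂ => cut ρ ‖z‖) = (Metric.ball (0 : ℂ) ρ).indicator (fun _ => (1 : ℝ)) := by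
    rw [← cut_eq]; funext z; simp
  rw [this, integral_indicator Metric.isOpen_ball.measurableSet]
  simp [Measure.real, Complex.volume_ball, hρ.le, mul_comm]

lemma cut_second (ρ : ℝ) (hρ : 0 < ρ) :
    ∫ z : ℂ, ‖z‖ ^ 2 * cut ρ ‖z‖ = Real.pi * ρ ^ 4 / 2 := by
  rw [integral_fun_norm_addHaar (volume : Measure ℂ) (fun t => t ^ 2 * cut ρ t)]
  have h1 : ∫ y in Set.Ioi (0 : ℝ), y ^ (Module.finrank ℝ ℂ - 1) • (y ^ 2 * cut ρ y)
      = ρ ^ 4 / 4 := by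
    have : (fun y : ℝ => y ^ (Module.finrank ℝ ℂ - 1) • (y ^ 2 * cut ρ y)) =
      (Set.Iio ρ).indicator (fun y => y ^ 3) := by
      funext y
      by_cases h : y < ρ <;> simp [cut, Set.indicator, h, Complex.finrank_real_complex]
      ring
    rw [this, setIntegral_indicator measurableSet_Iio, Set.Ioi_inter_Iio,
      ← integral_Ioc_eq_integral_Ioo, ← intervalIntegral.integral_of_le hρ.le, integral_pow]
    norm_num
  rw [h1]
  simp [Measure.real, Complex.volume_ball, Complex.finrank_real_complex]
  ring

lemma local1 (F : Polynomial ℂ) (a : ℂ) (ρ : ℝ) (hρ : 0 < ρ) :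
    ρ * ‖F.derivative.eval a‖ ≤
      8 / (Real.pi * ρ ^ 2) * (∫ u : ℂ, |‖F.eval (u + a)‖ - 1| * cut ρ ‖u‖)
        + 4 * (1 - ‖F.eval a‖) := by
  obtain ⟨c, hc, hcF⟩ : ∃ c : ℂ, ‖c‖ = 1 ∧ c * F.eval a = (‖F.eval a‖ : ℂ) := by
    by_cases h : F.eval a = 0
    · exact ⟨1, by simp, by simp [h]⟩
    · refine ⟨(‖F.eval a‖ : ℂ) / F.eval a, ?_, ?_⟩
      · simp [h]
      · field_simp
  set G : Polynomial ℂ := Polynomial.C c * Polynomial.taylor a F with hG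
  have hGe : ∀ u, G.eval u = c * F.eval (u + a) := fun u => by
    simp [hG, Polynomial.taylor_eval]
  have hGn : ∀ u, ‖G.eval u‖ = ‖F.eval (u + a)‖ := fun u => by rw [hGe, norm_mul, hc, one_mul]
  have hG0 : G.coeff 0 = (‖F.eval a‖ : ℂ) := by
    rw [hG, Polynomial.coeff_C_mul, Polynomial.taylor_coeff_zero, hcF]
  have hG1 : ‖G.coeff 1‖ = ‖F.derivative.eval a‖ := by
    rw [hG, Polynomial.coeff_C_mul, Polynomial.taylor_coeff_one, norm_mul, hc, one_mul]
  have hg : ∀ n : ℕ, Integrable (fun z : ℂ => ‖z‖ ^ n * cut ρ ‖z‖) := fun n =>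
    cut_integrable ρ _ (by fun_prop)
  have hm := cut_measurable ρ
  obtain ⟨i1, e1⟩ := pair_int G (cut ρ) hg hm 1
  obtain ⟨i0, e0⟩ := pair_int G (cut ρ) hg hm 0
  obtain ⟨ix, ex⟩ := pair_int (Polynomial.X * G) (cut ρ) hg hm 0
  obtain ⟨ic, ec⟩ := pair_int 1 (cut ρ) hg hm 1
  have hGc : Continuous fun u => G.eval u := G.continuous
  have hFc : Continuous fun u => F.eval (u + a) := F.continuous.comp (continuous_add_const a)
  -- mean value for the real part
  have mv : ∫ u : ℂ, (G.eval u).re * cut ρ ‖u‖ = ‖F.eval a‖ * (Real.pi * ρ ^ 2) := by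
    have h := congrArg Complex.re e0
    rw [hG0] at h
    simp only [mul_zero, pow_zero, one_mul, mul_one, cut_vol ρ hρ] at h i0
    have h2 := integral_re i0
    simp only [RCLike.re_to_complex] at h2
    rw [← h2] at h
    simpa only [Complex.re_mul_ofReal, Complex.ofReal_re] using h
  have main : ∫ u : ℂ, conj u * ((2 * (G.eval u).re - 2 : ℝ) : ℂ) * (cut ρ ‖u‖ : ℂ)
      = G.coeff 1 * ((Real.pi * ρ ^ 4 / 2 : ℝ) : ℂ) := by
    have iy : Integrable (fun z : ℂ => conj ((Polynomial.X * G).eval z * conj z ^ 0 * (cut ρ ‖z‖ : ℂ))) :=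
      (Complex.conjLIE.integrable_comp_iff).2 ix
    have ey : ∫ z : ℂ, conj ((Polynomial.X * G).eval z * conj z ^ 0 * (cut ρ ‖z‖ : ℂ)) = 0 := by
      rw [integral_conj, ex]; simp
    have : (fun u : ℂ => conj u * ((2 * (G.eval u).re - 2 : ℝ) : ℂ) * (cut ρ ‖u‖ : ℂ)) =
      fun u : ℂ => (G.eval u * conj u ^ 1 * (cut ρ ‖u‖ : ℂ) +
        conj ((Polynomial.X * G).eval u * conj u ^ 0 * (cut ρ ‖u‖ : ℂ))) -
        2 * ((1 : Polynomial ℂ).eval u * conj u ^ 1 * (cut ρ ‖u‖ : ℂ)) := by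
      funext u
      have h : ((2 * (G.eval u).re - 2 : ℝ) : ℂ) = G.eval u + conj (G.eval u) - 2 := by
        rw [Complex.add_conj]; push_cast; ring
      rw [h]; simp; ring
    rw [this, integral_sub (i1.fun_add iy) (ic.const_mul 2), integral_add i1 iy, ey, e1,
      integral_const_mul, ec]
    rw [show 2 * 1 = 2 from rfl, cut_second ρ hρ]
    simp [Polynomial.coeff_one]
  have hfi : Integrable (fun u : ℂ => |‖F.eval (u + a)‖ - 1| * cut ρ ‖u‖) :=
    cut_integrable ρ _ (by fun_prop)
  have hri : Integrable (fun u : ℂ => (G.eval u).re * cut ρ ‖u‖) :=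
    cut_integrable ρ _ (by fun_prop)
  have hoi : Integrable (fun u : ℂ => cut ρ ‖u‖) := by simpa using hg 0
  have bound : ‖∫ u : ℂ, conj u * ((2 * (G.eval u).re - 2 : ℝ) : ℂ) * (cut ρ ‖u‖ : ℂ)‖ ≤
      ∫ u : ℂ, (2 * ρ) * ((2 * (|‖F.eval (u + a)‖ - 1| * cut ρ ‖u‖) + cut ρ ‖u‖)
        - (G.eval u).re * cut ρ ‖u‖) := by
    refine norm_integral_le_of_norm_le ?_ ?_
    · exact (((hfi.const_mul 2).add hoi).sub hri).const_mul _
    · refine Filter.Eventually.of_forall fun u => ?_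
      have hre : (G.eval u).re ≤ ‖F.eval (u + a)‖ := by
        rw [← hGn]; exact Complex.re_le_norm _
      by_cases h : ‖u‖ < ρ
      · have hcut : cut ρ ‖u‖ = 1 := by simp [cut, h]
        rw [hcut, norm_mul, norm_mul, Complex.norm_real, RCLike.norm_conj]
        simp only [Complex.ofReal_one, norm_one, mul_one, Real.norm_eq_abs]
        have h1 : |2 * (G.eval u).re - 2| ≤
            2 * (2 * |‖F.eval (u + a)‖ - 1| + 1 - (G.eval u).re) := by
          have h3 := le_abs_self (‖F.eval (u + a)‖ - 1)
          have h4 := abs_nonneg (‖F.eval (u + a)‖ - 1)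
          rw [abs_le]; constructor <;> linarith
        calc ‖u‖ * |2 * (G.eval u).re - 2| ≤
            ρ * (2 * (2 * |‖F.eval (u + a)‖ - 1| + 1 - (G.eval u).re)) :=
              mul_le_mul h.le h1 (abs_nonneg _) hρ.le
          _ = _ := by ring
      · have hcut : cut ρ ‖u‖ = 0 := by simp [cut, not_lt.1 h]
        simp [hcut]
  rw [main, integral_const_mul, integral_sub ((hfi.const_mul 2).fun_add hoi) hri,
    integral_add (hfi.const_mul 2) hoi, integral_const_mul, mv, cut_vol ρ hρ, norm_mul, hG1,
    Complex.norm_real, Real.norm_of_nonneg (by positivity)] at bound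
  set A := ∫ u : ℂ, |‖F.eval (u + a)‖ - 1| * cut ρ ‖u‖
  set D := ‖F.derivative.eval a‖
  set n := ‖F.eval a‖
  have hpi := Real.pi_pos
  have hV : 0 < Real.pi * ρ ^ 2 := by positivity
  have : ρ * D * (Real.pi * ρ ^ 2 * ρ) ≤ (8 * A + 4 * (1 - n) * (Real.pi * ρ ^ 2)) * ρ := by
    nlinarith
  have h5 : ρ * D * (Real.pi * ρ ^ 2) ≤ 8 * A + 4 * (1 - n) * (Real.pi * ρ ^ 2) := by
    refine le_of_mul_le_mul_right ?_ hρ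
    linarith
  have h6 : ρ * D ≤ (8 * A + 4 * (1 - n) * (Real.pi * ρ ^ 2)) / (Real.pi * ρ ^ 2) := by
    rwa [le_div_iff₀ hV]
  refine h6.trans (le_of_eq ?_)
  field_simp

lemma jensen (φ : ℂ → ℝ) (hφ : Continuous φ) (ρ : ℝ) (hρ : 0 < ρ) :
    (∫ u : ℂ, |φ u| * cut ρ ‖u‖) ^ 2 ≤
      (Real.pi * ρ ^ 2) * ∫ u : ℂ, φ u ^ 2 * cut ρ ‖u‖ := by
  set A := ∫ u : ℂ, |φ u| * cut ρ ‖u‖ with hA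
  set B := ∫ u : ℂ, φ u ^ 2 * cut ρ ‖u‖ with hB
  set V := Real.pi * ρ ^ 2 with hV
  have hVp : 0 < V := by have := Real.pi_pos; positivity
  have iA : Integrable (fun u : ℂ => |φ u| * cut ρ ‖u‖) := cut_integrable ρ _ (by fun_prop)
  have iB : Integrable (fun u : ℂ => φ u ^ 2 * cut ρ ‖u‖) := cut_integrable ρ _ (by fun_prop)
  have iV : Integrable (fun u : ℂ => cut ρ ‖u‖) := by
    simpa using cut_integrable ρ (fun _ => 1) continuous_const
  have iS : Integrable (fun u : ℂ =>
      φ u ^ 2 * cut ρ ‖u‖ - (2 * (A / V)) * (|φ u| * cut ρ ‖u‖)) := iB.sub (iA.const_mul _)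
  have h : 0 ≤ ∫ u : ℂ, ((φ u ^ 2 * cut ρ ‖u‖ - (2 * (A / V)) * (|φ u| * cut ρ ‖u‖)) +
      (A / V) ^ 2 * cut ρ ‖u‖) := by
    refine integral_nonneg fun u => ?_
    have := mul_nonneg (sq_nonneg (|φ u| - A / V)) (cut_nonneg ρ ‖u‖)
    have e : |φ u| ^ 2 = φ u ^ 2 := sq_abs _
    simp only [Pi.zero_apply]
    rw [← e]
    refine this.trans (le_of_eq ?_)
    ring
  rw [integral_add (iS) (iV.const_mul _),
    integral_sub iB (iA.const_mul _),
    integral_const_mul, integral_const_mul, cut_vol ρ hρ, ← hA, ← hB, ← hV] at h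
  have e : B - 2 * (A / V) * A + (A / V) ^ 2 * V = B - A ^ 2 / V := by field_simp; ring
  rw [e] at h
  have : A ^ 2 / V ≤ B := by linarith
  rw [div_le_iff₀ hVp] at this
  linarith

lemma local2 (F : Polynomial ℂ) (a : ℂ) (ρ : ℝ) (hρ : 0 < ρ) :
    ρ ^ 2 * ‖F.derivative.eval a‖ ^ 2 ≤
      128 / (Real.pi * ρ ^ 2) * (∫ u : ℂ, (‖F.eval (u + a)‖ - 1) ^ 2 * cut ρ ‖u‖)
        + 32 * (‖F.eval a‖ - 1) ^ 2 := by
  have h1 := local1 F a ρ hρ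
  have hFc : Continuous fun u => F.eval (u + a) := F.continuous.comp (continuous_add_const a)
  have h2 := jensen (fun u => ‖F.eval (u + a)‖ - 1) (by fun_prop) ρ hρ
  set A := ∫ u : ℂ, |‖F.eval (u + a)‖ - 1| * cut ρ ‖u‖
  set B := ∫ u : ℂ, (‖F.eval (u + a)‖ - 1) ^ 2 * cut ρ ‖u‖
  have hVp : 0 < Real.pi * ρ ^ 2 := by have := Real.pi_pos; positivity
  set V := Real.pi * ρ ^ 2
  have h3 : (ρ * ‖F.derivative.eval a‖) ^ 2 ≤ (8 / V * A + 4 * (1 - ‖F.eval a‖)) ^ 2 :=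
    pow_le_pow_left₀ (by positivity) h1 2
  have h4 : (8 / V * A) ^ 2 ≤ 64 / V * B := by
    have : (8 / V * A) ^ 2 = 64 / V ^ 2 * A ^ 2 := by ring
    rw [this]
    calc 64 / V ^ 2 * A ^ 2 ≤ 64 / V ^ 2 * (V * B) := by gcongr
      _ = 64 / V * B := by field_simp
  have h5 : 128 / V * B = 2 * (64 / V * B) := by ring
  rw [h5]
  nlinarith [sq_nonneg (8 / V * A - 4 * (1 - ‖F.eval a‖))]

lemma gauss_moment' (n : ℕ) :
    ∫ z : ℂ, ‖z‖ ^ n * Real.exp (-‖z‖ ^ 2) = Real.pi * Real.Gamma (((n : ℝ) + 2) / 2) := by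
  have h := Complex.integral_rpow_mul_exp_neg_rpow (p := 2) (q := n) (by norm_num)
    (by have : (0 : ℝ) ≤ n := Nat.cast_nonneg n
        linarith)
  simp only [Real.rpow_natCast, Real.rpow_two] at h
  rw [h]; ring

lemma gauss_int (n : ℕ) : Integrable (fun z : ℂ => ‖z‖ ^ n * Real.exp (-‖z‖ ^ 2)) := by
  by_contra hc
  have h := integral_undef hc
  rw [gauss_moment'] at h
  have := Real.Gamma_pos_of_pos (s := ((n : ℝ) + 2) / 2) (by positivity)
  exact (mul_pos Real.pi_pos this).ne' h

lemma gauss_moment (k : ℕ) :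
    ∫ z : ℂ, ‖z‖ ^ (2 * k) * Real.exp (-‖z‖ ^ 2) = Real.pi * (k.factorial : ℝ) := by
  rw [gauss_moment', ← Real.Gamma_nat_eq_factorial]
  congr 2; push_cast; ring

noncomputable def gw1 (t : ℝ) : ℝ := Real.exp (-t ^ 2) / (1 + t ^ 2)

lemma gw1_measurable : Measurable gw1 := by unfold gw1; fun_prop

lemma gw1_int (n : ℕ) : Integrable (fun z : ℂ => ‖z‖ ^ n * gw1 ‖z‖) := by
  refine (gauss_int n).mono ?_ (Filter.Eventually.of_forall fun z => ?_)
  · apply Measurable.aestronglyMeasurable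
    have := gw1_measurable
    fun_prop
  · rw [norm_mul, norm_mul]
    gcongr
    unfold gw1
    rw [Real.norm_of_nonneg (by positivity), Real.norm_of_nonneg (by positivity)]
    apply div_le_self (by positivity)
    nlinarith [sq_nonneg ‖z‖]

lemma gw1_moment (k : ℕ) :
    Real.pi * (k.factorial : ℝ) / (k + 2) ≤ ∫ z : ℂ, ‖z‖ ^ (2 * k) * gw1 ‖z‖ := by
  have hk : (0 : ℝ) < k + 2 := by positivity
  have i1 := gauss_int (2 * k)
  have i2 := gauss_int (2 * (k + 1))
  have e : ∫ z : ℂ, ((2 / ((k : ℝ) + 2) - 1 / (k + 2) ^ 2) *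
      (‖z‖ ^ (2 * k) * Real.exp (-‖z‖ ^ 2)) - 1 / ((k : ℝ) + 2) ^ 2 *
      (‖z‖ ^ (2 * (k + 1)) * Real.exp (-‖z‖ ^ 2))) = Real.pi * (k.factorial : ℝ) / (k + 2) := by
    rw [integral_sub (i1.const_mul _) (i2.const_mul _), integral_const_mul, integral_const_mul,
      gauss_moment, gauss_moment, Nat.factorial_succ]
    push_cast
    field_simp
    ring
  rw [← e]
  refine integral_mono ((i1.const_mul _).sub (i2.const_mul _)) (gw1_int (2 * k)) fun z => ?_
  have h : (2 / ((k : ℝ) + 2) - 1 / (k + 2) ^ 2) - 1 / ((k : ℝ) + 2) ^ 2 * ‖z‖ ^ 2 ≤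
      1 / (1 + ‖z‖ ^ 2) := by
    rw [le_div_iff₀ (by positivity)]
    have : (2 / ((k : ℝ) + 2) - 1 / (k + 2) ^ 2 - 1 / ((k : ℝ) + 2) ^ 2 * ‖z‖ ^ 2)
      * (1 + ‖z‖ ^ 2) = 1 - ((1 + ‖z‖ ^ 2) / (k + 2) - 1) ^ 2 := by
      field_simp; ring
    rw [this]
    nlinarith [sq_nonneg ((1 + ‖z‖ ^ 2) / ((k : ℝ) + 2) - 1)]
  have h2 : 0 ≤ ‖z‖ ^ (2 * k) * Real.exp (-‖z‖ ^ 2) := by positivity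
  have h3 := mul_le_mul_of_nonneg_right h h2
  simp only [gw1]
  calc _ = (2 / ((k : ℝ) + 2) - 1 / (k + 2) ^ 2 - 1 / ((k : ℝ) + 2) ^ 2 * ‖z‖ ^ 2) *
        (‖z‖ ^ (2 * k) * Real.exp (-‖z‖ ^ 2)) := by ring
    _ ≤ _ := h3
    _ = _ := by ring

lemma gauss_meas : Measurable (fun t : ℝ => Real.exp (-t ^ 2)) := by fun_prop

lemma poly_gauss_int (Q : Polynomial ℂ) :
    Integrable (fun z : ℂ => ‖Q.eval z‖ ^ 2 * Real.exp (-‖z‖ ^ 2)) :=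
  (normsq_int Q (fun t => Real.exp (-t ^ 2)) gauss_int gauss_meas _ (Nat.lt_succ_self _)).1

lemma poincare (F : Polynomial ℂ) :
    ∫ z : ℂ, ‖F.eval z - F.eval 0‖ ^ 2 * Real.exp (-‖z‖ ^ 2) ≤
      2 * ∫ z : ℂ, ‖F.derivative.eval z‖ ^ 2 * gw1 ‖z‖ := by
  set N := F.natDegree + 1 with hN
  have d1 : (F - Polynomial.C (F.eval 0)).natDegree < N + 1 := by
    rw [Polynomial.natDegree_sub_C]; omega
  have d2 : F.derivative.natDegree < N := by
    have := Polynomial.natDegree_derivative_le F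
    omega
  have h1 := (normsq_int (F - Polynomial.C (F.eval 0)) (fun t => Real.exp (-t ^ 2)) gauss_int
    gauss_meas _ d1).2
  have h2 := (normsq_int F.derivative gw1 gw1_int gw1_measurable _ d2).2
  simp only [Polynomial.eval_sub, Polynomial.eval_C] at h1
  rw [h1, h2, Finset.sum_range_succ', Finset.mul_sum]
  have z0 : (F - Polynomial.C (F.eval 0)).coeff 0 = 0 := by
    simp [Polynomial.coeff_zero_eq_eval_zero]
  rw [z0]
  simp only [norm_zero, ne_eq, OfNat.ofNat_ne_zero, not_false_eq_true, zero_pow, zero_mul, add_zero]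
  refine Finset.sum_le_sum fun k _ => ?_
  rw [gauss_moment, Polynomial.coeff_derivative, Polynomial.coeff_sub, Polynomial.coeff_C_succ,
    sub_zero, norm_mul]
  have hn : ‖(k : ℂ) + 1‖ = (k : ℝ) + 1 := by
    rw [← Nat.cast_succ, Complex.norm_natCast]; push_cast; rfl
  rw [hn]
  have hm := gw1_moment k
  set m := ∫ z : ℂ, ‖z‖ ^ (2 * k) * gw1 ‖z‖
  set c := ‖F.coeff (k + 1)‖
  calc c ^ 2 * (Real.pi * ((k + 1).factorial : ℝ))
      ≤ 2 * ((c * ((k : ℝ) + 1)) ^ 2 * (Real.pi * (k.factorial : ℝ) / (k + 2))) := by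
        rw [Nat.factorial_succ]; push_cast
        have : 2 * ((c * ((k : ℝ) + 1)) ^ 2 * (Real.pi * (k.factorial : ℝ) / (k + 2))) =
          c ^ 2 * (Real.pi * (((k : ℝ) + 1) * k.factorial)) * (2 * (k + 1) / (k + 2)) := by
          field_simp
        rw [this]
        apply le_mul_of_one_le_right
        · have := Real.pi_pos; positivity
        · rw [le_div_iff₀ (by positivity)]
          have : (0 : ℝ) ≤ k := Nat.cast_nonneg k
          linarith
    _ ≤ _ := by gcongr

noncomputable def rad (a : ℂ) : ℝ := 1 / (2 * (1 + ‖a‖))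

lemma rad_pos (a : ℂ) : 0 < rad a := by unfold rad; positivity

lemma kernel_bound (a ζ : ℂ) (h : ‖ζ - a‖ < rad a) :
    ‖a - ζ‖ < 1 / (1 + ‖ζ‖) ∧
    Real.exp (-‖a‖ ^ 2) * (4 * (1 + ‖a‖) ^ 2 / Real.pi) ≤
      64 * (1 + ‖ζ‖) ^ 2 / Real.pi * Real.exp (-‖ζ‖ ^ 2) := by
  have ha := norm_nonneg a
  have hz := norm_nonneg ζ
  have hr : rad a * (2 * (1 + ‖a‖)) = 1 := by unfold rad; field_simp
  have hp := rad_pos a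
  have hr2 : rad a ≤ 1 / 2 := by nlinarith
  have t1 : ‖ζ‖ ≤ ‖a‖ + rad a := by
    have := norm_add_le (ζ - a) a
    rw [sub_add_cancel] at this; linarith
  have t2 : ‖a‖ ≤ ‖ζ‖ + rad a := by
    have := norm_add_le (a - ζ) ζ
    rw [sub_add_cancel, norm_sub_rev] at this; linarith
  constructor
  · rw [norm_sub_rev, lt_div_iff₀ (by positivity)]
    have := norm_nonneg (ζ - a)
    nlinarith
  · have e1 : Real.exp (-‖a‖ ^ 2) ≤ 4 * Real.exp (-‖ζ‖ ^ 2) := by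
      have : -‖a‖ ^ 2 ≤ 5 / 4 + -‖ζ‖ ^ 2 := by nlinarith
      have h4 : Real.exp (5 / 4) ≤ 4 := by
        have h1 := Real.exp_one_lt_d9
        have h5 : Real.exp (5 / 4) ^ 4 = Real.exp 1 ^ 5 := by
          rw [← Real.exp_nat_mul, ← Real.exp_nat_mul]; norm_num
        have h6 : Real.exp 1 ^ 5 ≤ 4 ^ 4 := by
          calc Real.exp 1 ^ 5 ≤ 2.8 ^ 5 := by
                gcongr; linarith
            _ ≤ 4 ^ 4 := by norm_num
        rw [← h5] at h6
        exact le_of_pow_le_pow_left₀ (by norm_num) (by norm_num) h6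
      calc Real.exp (-‖a‖ ^ 2) ≤ Real.exp (5 / 4 + -‖ζ‖ ^ 2) := Real.exp_le_exp.2 this
        _ = Real.exp (5 / 4) * Real.exp (-‖ζ‖ ^ 2) := Real.exp_add _ _
        _ ≤ _ := by gcongr
    have e2 : (1 + ‖a‖) ^ 2 ≤ 4 * (1 + ‖ζ‖) ^ 2 := by
      have : 1 + ‖a‖ ≤ 2 * (1 + ‖ζ‖) := by linarith
      nlinarith
    have hpi := Real.pi_pos
    calc Real.exp (-‖a‖ ^ 2) * (4 * (1 + ‖a‖) ^ 2 / Real.pi) ≤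
        (4 * Real.exp (-‖ζ‖ ^ 2)) * (4 * (4 * (1 + ‖ζ‖) ^ 2) / Real.pi) := by gcongr
      _ = _ := by ring

lemma fubini (q : ℂ → ℝ) (hq : Continuous q) (hq0 : ∀ z, 0 ≤ q z)
    (hqi : Integrable (fun z : ℂ => q z * Real.exp (-‖z‖ ^ 2))) :
    ∫⁻ a : ℂ, ENNReal.ofReal (Real.exp (-‖a‖ ^ 2) * (4 * (1 + ‖a‖) ^ 2 / Real.pi) *
      ∫ u : ℂ, q (u + a) * cut (rad a) ‖u‖) ≤
    ENNReal.ofReal (64 * ∫ z : ℂ, q z * Real.exp (-‖z‖ ^ 2)) := by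
  have hpi := Real.pi_pos
  set k : ℂ → ℂ → ENNReal := fun a ζ => ({p : ℂ × ℂ | ‖p.1 - p.2‖ < 1 / (1 + ‖p.2‖)}).indicator
    (fun p => ENNReal.ofReal (64 * (1 + ‖p.2‖) ^ 2 / Real.pi * (q p.2 * Real.exp (-‖p.2‖ ^ 2)))) (a, ζ)
    with hk
  have hS : MeasurableSet {p : ℂ × ℂ | ‖p.1 - p.2‖ < 1 / (1 + ‖p.2‖)} :=
    measurableSet_lt (by fun_prop) (by fun_prop)
  have hkm : Measurable (Function.uncurry k) := by
    have : Function.uncurry k = ({p : ℂ × ℂ | ‖p.1 - p.2‖ < 1 / (1 + ‖p.2‖)}).indicator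
      (fun p => ENNReal.ofReal (64 * (1 + ‖p.2‖) ^ 2 / Real.pi *
        (q p.2 * Real.exp (-‖p.2‖ ^ 2)))) := by
      funext ⟨a, ζ⟩; rfl
    rw [this]
    refine Measurable.indicator ?_ hS
    have := hq.measurable
    fun_prop
  have step1 : ∀ a : ℂ, ENNReal.ofReal (Real.exp (-‖a‖ ^ 2) * (4 * (1 + ‖a‖) ^ 2 / Real.pi) *
      ∫ u : ℂ, q (u + a) * cut (rad a) ‖u‖) ≤ ∫⁻ ζ, k a ζ := by
    intro a
    rw [← integral_const_mul]
    rw [ofReal_integral_eq_lintegral_ofReal]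
    · rw [← lintegral_add_right_eq_self (fun ζ => k a ζ) a]
      refine lintegral_mono fun u => ?_
      simp only [hk]
      by_cases h : ‖u‖ < rad a
      · obtain ⟨h1, h2⟩ := kernel_bound a (u + a) (by simpa using h)
        rw [Set.indicator_of_mem (by exact h1)]
        apply ENNReal.ofReal_le_ofReal
        have hcut : cut (rad a) ‖u‖ = 1 := by simp [cut, h]
        rw [hcut, mul_one]
        calc _ ≤ 64 * (1 + ‖u + a‖) ^ 2 / Real.pi * Real.exp (-‖u + a‖ ^ 2) * q (u + a) :=
              mul_le_mul_of_nonneg_right h2 (hq0 _)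
          _ = _ := by ring
      · have hcut : cut (rad a) ‖u‖ = 0 := by simp [cut, not_lt.1 h]
        rw [hcut]; simp
    · exact (cut_integrable (rad a) _ (by fun_prop)).const_mul _
    · refine Filter.Eventually.of_forall fun u => ?_
      have := hq0 (u + a)
      have := cut_nonneg (rad a) ‖u‖
      simp only [Pi.zero_apply]
      positivity
  calc _ ≤ ∫⁻ a, ∫⁻ ζ, k a ζ := lintegral_mono step1
    _ = ∫⁻ ζ, ∫⁻ a, k a ζ := lintegral_lintegral_swap hkm.aemeasurable
    _ = ∫⁻ ζ, ENNReal.ofReal (64 * (q ζ * Real.exp (-‖ζ‖ ^ 2))) := by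
      refine lintegral_congr fun ζ => ?_
      have e : (fun a => k a ζ) = (Metric.ball ζ (1 / (1 + ‖ζ‖))).indicator
        (fun _ => ENNReal.ofReal (64 * (1 + ‖ζ‖) ^ 2 / Real.pi * (q ζ * Real.exp (-‖ζ‖ ^ 2)))) := by
        funext a
        simp [hk, Set.indicator, dist_eq_norm]
      rw [e, lintegral_indicator Metric.isOpen_ball.measurableSet, lintegral_const,
        Measure.restrict_apply_univ, Complex.volume_ball]
      have h0 := hq0 ζ
      have : ((NNReal.pi : NNReal) : ENNReal) = ENNReal.ofReal Real.pi := by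
        rw [← NNReal.coe_real_pi, ENNReal.ofReal_coe_nnreal]
      rw [this, ← ENNReal.ofReal_pow (by positivity), ← ENNReal.ofReal_mul (by positivity),
        ← ENNReal.ofReal_mul (by positivity)]
      congr 1
      field_simp
    _ = _ := by
      rw [← integral_const_mul, ofReal_integral_eq_lintegral_ofReal (hqi.const_mul 64)]
      refine Filter.Eventually.of_forall fun u => ?_
      have := hq0 u
      simp only [Pi.zero_apply]
      positivity

lemma f_int (F : Polynomial ℂ) :
    Integrable (fun z : ℂ => (‖F.eval z‖ - 1) ^ 2 * Real.exp (-‖z‖ ^ 2)) := by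
  have hFc : Continuous fun u => F.eval u := F.continuous
  have h0 : Integrable (fun z : ℂ => Real.exp (-‖z‖ ^ 2)) := by simpa using gauss_int 0
  refine (((poly_gauss_int F).const_mul 2).add (h0.const_mul 2)).mono ?_
    (Filter.Eventually.of_forall fun z => ?_)
  · apply Continuous.aestronglyMeasurable; fun_prop
  · simp only [Pi.add_apply]
    rw [Real.norm_of_nonneg (by positivity), Real.norm_of_nonneg (by positivity)]
    have : (‖F.eval z‖ - 1) ^ 2 ≤ 2 * ‖F.eval z‖ ^ 2 + 2 := by nlinarith [sq_nonneg (‖F.eval z‖ + 1)]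
    have := mul_le_mul_of_nonneg_right this (Real.exp_pos (-‖z‖ ^ 2)).le
    linarith

lemma deriv_bound (F : Polynomial ℂ) :
    ∫ z : ℂ, ‖F.derivative.eval z‖ ^ 2 * gw1 ‖z‖ ≤
      65792 * ∫ z : ℂ, (‖F.eval z‖ - 1) ^ 2 * Real.exp (-‖z‖ ^ 2) := by
  have hpi := Real.pi_pos
  have hFc : Continuous fun u => F.eval u := F.continuous
  have hfi := f_int F
  set E := ∫ z : ℂ, (‖F.eval z‖ - 1) ^ 2 * Real.exp (-‖z‖ ^ 2) with hE
  have hE0 : 0 ≤ E := integral_nonneg fun z => by simp only [Pi.zero_apply]; positivity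
  have hgi := (normsq_int F.derivative gw1 gw1_int gw1_measurable _ (Nat.lt_succ_self _)).1
  rw [← ENNReal.ofReal_le_ofReal_iff (by positivity),
    ofReal_integral_eq_lintegral_ofReal hgi (Filter.Eventually.of_forall fun z => by
      simp only [Pi.zero_apply, gw1]; positivity)]
  have hfub := fubini (fun z => (‖F.eval z‖ - 1) ^ 2) (by fun_prop) (fun z => sq_nonneg _) hfi
  have hB0 : ∀ a : ℂ, 0 ≤ ∫ u : ℂ, (‖F.eval (u + a)‖ - 1) ^ 2 * cut (rad a) ‖u‖ := fun a =>
    integral_nonneg fun u => mul_nonneg (sq_nonneg _) (cut_nonneg _ _)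
  calc _ ≤ ∫⁻ a : ℂ, (ENNReal.ofReal 1024 * ENNReal.ofReal (Real.exp (-‖a‖ ^ 2) *
          (4 * (1 + ‖a‖) ^ 2 / Real.pi) *
          ∫ u : ℂ, (‖F.eval (u + a)‖ - 1) ^ 2 * cut (rad a) ‖u‖) +
          ENNReal.ofReal (256 * ((‖F.eval a‖ - 1) ^ 2 * Real.exp (-‖a‖ ^ 2)))) := by
        refine lintegral_mono fun a => ?_
        have hB := hB0 a
        have hl := local2 F a (rad a) (rad_pos a)
        set B := ∫ u : ℂ, (‖F.eval (u + a)‖ - 1) ^ 2 * cut (rad a) ‖u‖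
        rw [← ENNReal.ofReal_mul (by positivity), ← ENNReal.ofReal_add (by positivity) (by positivity)]
        apply ENNReal.ofReal_le_ofReal
        have hr : 128 / (Real.pi * rad a ^ 2) = 128 * (4 * (1 + ‖a‖) ^ 2 / Real.pi) := by
          unfold rad; field_simp; norm_num
        rw [hr] at hl
        have hg : gw1 ‖a‖ ≤ 8 * rad a ^ 2 * Real.exp (-‖a‖ ^ 2) := by
          have : 1 / (1 + ‖a‖ ^ 2) ≤ 8 * rad a ^ 2 := by
            have : 8 * rad a ^ 2 = 2 / (1 + ‖a‖) ^ 2 := by unfold rad; field_simp; norm_num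
            rw [this, div_le_div_iff₀ (by positivity) (by positivity)]
            nlinarith [sq_nonneg (1 - ‖a‖)]
          calc gw1 ‖a‖ = 1 / (1 + ‖a‖ ^ 2) * Real.exp (-‖a‖ ^ 2) := by unfold gw1; ring
            _ ≤ _ := by gcongr
        calc ‖F.derivative.eval a‖ ^ 2 * gw1 ‖a‖
            ≤ ‖F.derivative.eval a‖ ^ 2 * (8 * rad a ^ 2 * Real.exp (-‖a‖ ^ 2)) := by gcongr
          _ = 8 * Real.exp (-‖a‖ ^ 2) * (rad a ^ 2 * ‖F.derivative.eval a‖ ^ 2) := by ring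
          _ ≤ 8 * Real.exp (-‖a‖ ^ 2) * (128 * (4 * (1 + ‖a‖) ^ 2 / Real.pi) * B
              + 32 * (‖F.eval a‖ - 1) ^ 2) := by gcongr
          _ = _ := by ring
    _ = ENNReal.ofReal 1024 * (∫⁻ a : ℂ, ENNReal.ofReal (Real.exp (-‖a‖ ^ 2) *
          (4 * (1 + ‖a‖) ^ 2 / Real.pi) *
          ∫ u : ℂ, (‖F.eval (u + a)‖ - 1) ^ 2 * cut (rad a) ‖u‖)) + ENNReal.ofReal (256 * E) := by
        rw [lintegral_add_right _ (by fun_prop), lintegral_const_mul' _ _ ENNReal.ofReal_ne_top,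
          hE, ← integral_const_mul, ofReal_integral_eq_lintegral_ofReal (hfi.const_mul 256)]
        refine Filter.Eventually.of_forall fun u => ?_
        simp only [Pi.zero_apply]; positivity
    _ ≤ ENNReal.ofReal 1024 * ENNReal.ofReal (64 * E) + ENNReal.ofReal (256 * E) := by gcongr
    _ = _ := by
        rw [← ENNReal.ofReal_mul (by positivity), ← ENNReal.ofReal_add (by positivity) (by positivity)]
        congr 1; ring

/-- **Local-local stable phase retrieval at 1 in the Bargmann–Fock space.**
With `δ = 1/4601` and `M̃ = 23003`: for every polynomial `P` with `‖P‖_F ≤ δ`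
there is a unimodular `w` with `‖w(1+P) − 1‖_F ≤ M̃ ‖|1+P| − 1‖_F`. -/
theorem stmt1 (P : Polynomial ℂ)
    (hP : fockNorm (fun z => P.eval z) ≤ 1 / 4601) :
    ∃ w : ℂ, ‖w‖ = 1 ∧
      fockNorm (fun z => w * (1 + P.eval z) - 1)
        ≤ 23003 * fockNorm (fun z => ‖1 + P.eval z‖ - 1) := by
  set F : Polynomial ℂ := 1 + P with hF
  have hFe : ∀ z, 1 + P.eval z = F.eval z := fun z => by simp [hF]
  simp only [hFe]
  obtain ⟨c, hc, hcF⟩ : ∃ c : ℂ, ‖c‖ = 1 ∧ c * F.eval 0 = (‖F.eval 0‖ : ℂ) := by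
    by_cases h : F.eval 0 = 0
    · exact ⟨1, by simp, by simp [h]⟩
    · refine ⟨(‖F.eval 0‖ : ℂ) / F.eval 0, ?_, ?_⟩
      · simp [h]
      · field_simp
  refine ⟨c, hc, ?_⟩
  have hpi := Real.pi_pos
  have hfi := f_int F
  have hdi : Integrable (fun z : ℂ => ‖F.eval z - F.eval 0‖ ^ 2 * Real.exp (-‖z‖ ^ 2)) := by
    simpa using poly_gauss_int (F - Polynomial.C (F.eval 0))
  have hwi : Integrable (fun z : ℂ => ‖c * F.eval z - 1‖ ^ 2 * Real.exp (-‖z‖ ^ 2)) := by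
    simpa using poly_gauss_int (Polynomial.C c * F - 1)
  have h1 := poincare F
  have h2 := deriv_bound F
  have h3 : ∫ z : ℂ, ‖c * F.eval z - 1‖ ^ 2 * Real.exp (-‖z‖ ^ 2) ≤
      4 * (∫ z : ℂ, (‖F.eval z‖ - 1) ^ 2 * Real.exp (-‖z‖ ^ 2)) +
      6 * ∫ z : ℂ, ‖F.eval z - F.eval 0‖ ^ 2 * Real.exp (-‖z‖ ^ 2) := by
    rw [← integral_const_mul, ← integral_const_mul,
      ← integral_add (hfi.const_mul 4) (hdi.const_mul 6)]
    refine integral_mono hwi ((hfi.const_mul 4).add (hdi.const_mul 6)) fun z => ?_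
    have t1 : ‖c * F.eval z - 1‖ ≤ ‖F.eval z - F.eval 0‖ + |‖F.eval 0‖ - 1| := by
      have e : c * F.eval z - 1 = c * (F.eval z - F.eval 0) + ((‖F.eval 0‖ - 1 : ℝ) : ℂ) := by
        push_cast; rw [← hcF]; ring
      rw [e]
      refine (norm_add_le _ _).trans (le_of_eq ?_)
      rw [norm_mul, hc, one_mul, Complex.norm_real, Real.norm_eq_abs]
    have t2 : |‖F.eval 0‖ - 1| ≤ ‖F.eval z - F.eval 0‖ + |‖F.eval z‖ - 1| := by
      have a1 := abs_norm_sub_norm_le (F.eval z) (F.eval 0)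
      have a2 := abs_sub_le ‖F.eval 0‖ ‖F.eval z‖ 1
      rw [abs_sub_comm ‖F.eval 0‖ ‖F.eval z‖] at a2
      linarith
    have e := sq_abs (‖F.eval z‖ - 1)
    set x := ‖F.eval z - F.eval 0‖
    set y := |‖F.eval 0‖ - 1|
    set v := |‖F.eval z‖ - 1|
    have hx : 0 ≤ x := norm_nonneg _
    have hy : 0 ≤ y := abs_nonneg _
    have hv : 0 ≤ v := abs_nonneg _
    have b1 : ‖c * F.eval z - 1‖ ^ 2 ≤ (x + y) ^ 2 := pow_le_pow_left₀ (norm_nonneg _) t1 2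
    have b2 : y ^ 2 ≤ (x + v) ^ 2 := pow_le_pow_left₀ hy t2 2
    have b3 : ‖c * F.eval z - 1‖ ^ 2 ≤ 4 * (‖F.eval z‖ - 1) ^ 2 + 6 * x ^ 2 := by
      rw [← e]
      nlinarith [sq_nonneg (x - y), sq_nonneg (x - v)]
    have := mul_le_mul_of_nonneg_right b3 (Real.exp_pos (-‖z‖ ^ 2)).le
    show _ ≤ _
    linarith
  unfold fockNorm
  simp only [Real.norm_eq_abs, sq_abs]
  set E := ∫ z : ℂ, (‖F.eval z‖ - 1) ^ 2 * Real.exp (-‖z‖ ^ 2) with hE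
  have hE0 : 0 ≤ E := integral_nonneg fun z => by simp only [Pi.zero_apply]; positivity
  have h4 : ∫ z : ℂ, ‖c * F.eval z - 1‖ ^ 2 * Real.exp (-‖z‖ ^ 2) ≤ 23003 ^ 2 * E := by
    linarith
  rw [show (23003 : ℝ) = Real.sqrt (23003 ^ 2) by rw [Real.sqrt_sq (by norm_num)],
    ← Real.sqrt_mul (by positivity)]
  apply Real.sqrt_le_sqrt
  calc _ ≤ 1 / Real.pi * (23003 ^ 2 * E) := by gcongr
    _ = _ := by ring
end

section
/- There exists an absolute constant C (one may take C = 4600) such that for every integer D ≥ 1 and every polynomial U(z) = Σ_{n=1}^{D} a_n z^n with a_n ∈ ℂ (so that U(0) = 0), one has ‖U‖_F ≤ C · ‖ρ ∘ U‖_F. -/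
open MeasureTheory

/-- The defect function `ρ(w) = ||1+w| − 1|`. -/
noncomputable def ρ (w : ℂ) : ℝ := |‖1 + w‖ - 1|

lemma rot_zero (f : ℂ → ℂ) (ζ l : ℂ) (hζ : ‖ζ‖ = 1) (hl : l ≠ 1)
    (hf : ∀ z, f (ζ * z) = l * f z) : ∫ z, f z = 0 := by
  have hmem : ζ ∈ Submonoid.unitSphere ℂ := by simp [Submonoid.unitSphere, hζ]
  let c : Circle := ⟨ζ, hmem⟩
  have h1 : ∫ z, f (rotation c z) = ∫ z, f z :=
    (rotation c).measurePreserving.integral_comp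
      (rotation c).toHomeomorph.measurableEmbedding f
  have h2 : ∀ z, f (rotation c z) = l * f z := fun z => by
    rw [rotation_apply]; exact hf z
  simp only [h2] at h1
  rw [integral_const_mul] at h1
  have : (l - 1) * ∫ z, f z = 0 := by rw [sub_mul, h1]; ring
  exact (mul_eq_zero.1 this).resolve_left (sub_ne_zero.2 hl)

lemma moment (n : ℕ) : ∫ z : ℂ, ‖z‖ ^ (2 * n) * Real.exp (-‖z‖ ^ 2) = Real.pi * n.factorial := by
  have := Complex.integral_rpow_mul_exp_neg_rpow (p := 2) (q := (2 * n : ℕ)) (by norm_num)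
    (by have : (0:ℝ) ≤ (2 * n : ℕ) := by positivity
        linarith)
  simp only [Real.rpow_natCast] at this
  simp only [Real.rpow_ofNat] at this
  rw [this]
  have h : (((2 * n : ℕ) : ℝ) + 2) / 2 = n + 1 := by push_cast; ring
  rw [h, Real.Gamma_nat_eq_factorial]; ring

lemma int_even (n : ℕ) : Integrable (fun z : ℂ => ‖z‖ ^ (2 * n) * Real.exp (-‖z‖ ^ 2)) := by
  apply Integrable.of_integral_ne_zero
  rw [moment]; positivity

lemma int_norm (k : ℕ) : Integrable (fun z : ℂ => ‖z‖ ^ k * Real.exp (-‖z‖ ^ 2)) := by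
  refine ((int_even 0).add (int_even k)).mono' (by fun_prop) (Filter.Eventually.of_forall fun z => ?_)
  have h0 := norm_nonneg z
  have he := Real.exp_pos (-‖z‖ ^ 2)
  rw [Real.norm_of_nonneg (by positivity)]
  simp only [Pi.add_apply, mul_zero, pow_zero]
  rw [← add_mul]
  gcongr
  rw [pow_mul', pow_two]
  nlinarith [sq_nonneg (‖z‖ ^ k - 1)]

lemma int_mono (n m : ℕ) : Integrable
    (fun z : ℂ => z ^ n * (starRingEnd ℂ z) ^ m * (Real.exp (-‖z‖ ^ 2) : ℂ)) := by
  refine (int_norm (n + m)).mono' (by fun_prop) (Filter.Eventually.of_forall fun z => ?_)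
  rw [norm_mul, norm_mul, norm_pow, norm_pow, RCLike.norm_conj, Complex.norm_real,
    Real.norm_of_nonneg (Real.exp_pos _).le, pow_add]

lemma exists_rot (k : ℕ) (hk : 1 ≤ k) : ∃ ζ : ℂ, ‖ζ‖ = 1 ∧ ζ ^ k = -1 := by
  obtain ⟨ζ, h⟩ := IsAlgClosed.exists_pow_nat_eq (-1 : ℂ) hk
  refine ⟨ζ, ?_, h⟩
  have : ‖ζ‖ ^ k = 1 := by rw [← norm_pow, h]; simp
  exact (pow_eq_one_iff_of_nonneg (norm_nonneg _) (by omega)).1 this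

lemma offdiag_lt (n m : ℕ) (h : n < m) :
    ∫ z : ℂ, z ^ n * (starRingEnd ℂ z) ^ m * (Real.exp (-‖z‖ ^ 2) : ℂ) = 0 := by
  obtain ⟨ζ, h1, h2⟩ := exists_rot (m - n) (by omega)
  have hc : ζ * starRingEnd ℂ ζ = 1 := by rw [Complex.mul_conj']; simp [h1]
  refine rot_zero _ ζ (-1) h1 (by norm_num) fun z => ?_
  rw [norm_mul, h1, one_mul]
  obtain ⟨d, rfl⟩ := Nat.exists_eq_add_of_lt h
  have h3 : n + d + 1 - n = d + 1 := by omega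
  rw [h3] at h2
  have h4 : (starRingEnd ℂ ζ) ^ (d + 1) = -1 := by rw [← map_pow, h2]; simp
  have : (ζ * z) ^ n * (starRingEnd ℂ (ζ * z)) ^ (n + d + 1)
      = (ζ * starRingEnd ℂ ζ) ^ n * (starRingEnd ℂ ζ) ^ (d + 1) *
        (z ^ n * (starRingEnd ℂ z) ^ (n + d + 1)) := by
    rw [map_mul]; ring
  rw [this, hc, h4]; ring

lemma offdiag_gt (n m : ℕ) (h : m < n) :
    ∫ z : ℂ, z ^ n * (starRingEnd ℂ z) ^ m * (Real.exp (-‖z‖ ^ 2) : ℂ) = 0 := by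
  have := offdiag_lt m n h
  have h2 := congrArg (starRingEnd ℂ) this
  rw [← integral_conj, map_zero] at h2
  rw [← h2]
  congr 1; ext z
  simp only [map_mul, map_pow, Complex.conj_conj, Complex.conj_ofReal]; ring

lemma diag (n : ℕ) :
    ∫ z : ℂ, z ^ n * (starRingEnd ℂ z) ^ n * (Real.exp (-‖z‖ ^ 2) : ℂ)
      = Real.pi * n.factorial := by
  have := moment n
  have h : ∀ z : ℂ, z ^ n * (starRingEnd ℂ z) ^ n * (Real.exp (-‖z‖ ^ 2) : ℂ)
      = ((‖z‖ ^ (2 * n) * Real.exp (-‖z‖ ^ 2) : ℝ) : ℂ) := fun z => by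
    rw [← mul_pow, Complex.mul_conj']; push_cast; rw [pow_mul]
  simp only [h]
  rw [integral_complex_ofReal, this]; push_cast; rfl

/-- The polynomial. -/
noncomputable def poly (D : ℕ) (a : ℕ → ℂ) (z : ℂ) : ℂ := ∑ n ∈ Finset.Icc 1 D, a n * z ^ n

lemma poly_cont (D : ℕ) (a : ℕ → ℂ) : Continuous (poly D a) := by
  unfold poly; fun_prop

lemma sq_expand (D : ℕ) (a : ℕ → ℂ) (z : ℂ) :
    ((‖poly D a z‖ ^ 2 * Real.exp (-‖z‖ ^ 2) : ℝ) : ℂ)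
    = ∑ n ∈ Finset.Icc 1 D, ∑ m ∈ Finset.Icc 1 D, a n * starRingEnd ℂ (a m) *
      (z ^ n * (starRingEnd ℂ z) ^ m * (Real.exp (-‖z‖ ^ 2) : ℂ)) := by
  push_cast
  rw [← Complex.mul_conj', poly, map_sum, Finset.sum_mul_sum, Finset.sum_mul]
  refine Finset.sum_congr rfl fun n _ => ?_
  rw [Finset.sum_mul]
  refine Finset.sum_congr rfl fun m _ => ?_
  rw [map_mul, map_pow]; ring

lemma int_sq (D : ℕ) (a : ℕ → ℂ) :
    Integrable (fun z : ℂ => ‖poly D a z‖ ^ 2 * Real.exp (-‖z‖ ^ 2)) := by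
  have : Integrable (fun z : ℂ => ((‖poly D a z‖ ^ 2 * Real.exp (-‖z‖ ^ 2) : ℝ) : ℂ)) := by
    simp only [sq_expand]
    exact integrable_finsetSum _ fun n _ => integrable_finsetSum _ fun m _ =>
      (int_mono n m).const_mul _
  have h2 := this.re
  simp only [RCLike.re_to_complex, Complex.ofReal_re] at h2
  exact h2

/-- Squared norm. -/
noncomputable def nsq (D : ℕ) (a : ℕ → ℂ) : ℝ :=
  ∑ n ∈ Finset.Icc 1 D, ‖a n‖ ^ 2 * n.factorial

lemma parseval (D : ℕ) (a : ℕ → ℂ) :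
    ∫ z : ℂ, ‖poly D a z‖ ^ 2 * Real.exp (-‖z‖ ^ 2) = Real.pi * nsq D a := by
  apply Complex.ofReal_injective
  rw [← integral_complex_ofReal]
  simp only [sq_expand]
  rw [integral_finsetSum _ fun n _ => integrable_finsetSum _ fun m _ =>
      (int_mono n m).const_mul _]
  rw [nsq, Finset.mul_sum, Complex.ofReal_sum]
  refine Finset.sum_congr rfl fun n hn => ?_
  rw [integral_finsetSum _ fun m _ => (int_mono n m).const_mul _]
  rw [Finset.sum_eq_single n]
  · rw [integral_const_mul, diag, Complex.mul_conj']; push_cast; ring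
  · intro m _ hm
    rw [integral_const_mul]
    rcases lt_or_gt_of_ne hm with h | h
    · rw [offdiag_gt _ _ h, mul_zero]
    · rw [offdiag_lt _ _ h, mul_zero]
  · intro h; exact absurd hn h

lemma pointwise (D : ℕ) (a : ℕ → ℂ) (z : ℂ) :
    ‖poly D a z‖ ^ 2 ≤ nsq D a * Real.exp (‖z‖ ^ 2) := by
  have h1 : ‖poly D a z‖ ≤ ∑ n ∈ Finset.Icc 1 D, (‖a n‖ * √(n.factorial : ℝ)) *
      (‖z‖ ^ n / √(n.factorial : ℝ)) := by
    refine (norm_sum_le _ _).trans (Finset.sum_le_sum fun n _ => ?_)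
    have : 0 < √(n.factorial : ℝ) := by positivity
    rw [norm_mul, norm_pow]; apply le_of_eq; field_simp
  have h2 := Finset.sum_mul_sq_le_sq_mul_sq (Finset.Icc 1 D)
    (fun n => ‖a n‖ * √(n.factorial : ℝ)) (fun n => ‖z‖ ^ n / √(n.factorial : ℝ))
  have h3 : ∑ n ∈ Finset.Icc 1 D, (‖a n‖ * √(n.factorial : ℝ)) ^ 2 = nsq D a := by
    refine Finset.sum_congr rfl fun n _ => ?_
    rw [mul_pow, Real.sq_sqrt (by positivity)]
  have h4 : ∑ n ∈ Finset.Icc 1 D, (‖z‖ ^ n / √(n.factorial : ℝ)) ^ 2 ≤ Real.exp (‖z‖ ^ 2) := by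
    calc _ = ∑ n ∈ Finset.Icc 1 D, (‖z‖ ^ 2) ^ n / (n.factorial : ℝ) := by
          refine Finset.sum_congr rfl fun n _ => ?_
          rw [div_pow, Real.sq_sqrt (by positivity), ← pow_mul, ← pow_mul, mul_comm]
      _ ≤ ∑ n ∈ Finset.range (D + 1), (‖z‖ ^ 2) ^ n / (n.factorial : ℝ) := by
          apply Finset.sum_le_sum_of_subset_of_nonneg
          · intro n hn; simp at hn ⊢; omega
          · intros; positivity
      _ ≤ _ := Real.sum_le_exp_of_nonneg (by positivity) _
  have h5 : 0 ≤ nsq D a := Finset.sum_nonneg fun n _ => by positivity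
  calc _ ≤ _ := by gcongr
    _ ≤ _ := h2
    _ ≤ _ := by rw [h3]; gcongr

lemma mono_radial (k : ℕ) (hk : 1 ≤ k) (P : ℝ → Prop)
    (hm : MeasurableSet {z : ℂ | P ‖z‖}) :
    ∫ z in {z : ℂ | P ‖z‖}, z ^ k * (Real.exp (-‖z‖ ^ 2) : ℂ) = 0 := by
  classical
  rw [← integral_indicator hm]
  obtain ⟨ζ, h1, h2⟩ := exists_rot k hk
  refine rot_zero _ ζ (-1) h1 (by norm_num) fun z => ?_
  simp only [Set.indicator_apply, Set.mem_ofPred_eq, norm_mul, h1, one_mul, mul_pow, h2]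
  split_ifs <;> ring

lemma tail (b : ℝ) (hb : 0 < b) :
    ∫ z in {z : ℂ | Real.exp (-‖z‖ ^ 2) < b}, Real.exp (-‖z‖ ^ 2) ≤ Real.pi * b := by
  set R := √(max 0 (-Real.log b)) with hR
  have hR2 : R ^ 2 = max 0 (-Real.log b) := Real.sq_sqrt (le_max_left _ _)
  have hR0 : 0 ≤ R := Real.sqrt_nonneg _
  have hb' : Real.exp (-R ^ 2) ≤ b := by
    rw [hR2, ← Real.exp_log hb, Real.exp_le_exp, Real.exp_log hb]
    have := le_max_right 0 (-Real.log b); linarith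
  have hI : Integrable (fun z : ℂ => Real.exp (-‖z‖ ^ 2)) := by simpa using int_norm 0
  have hsub : {z : ℂ | Real.exp (-‖z‖ ^ 2) < b} ⊆ {z : ℂ | R ≤ ‖z‖} := by
    intro z hz
    simp only [Set.mem_ofPred_eq] at hz ⊢
    rw [← Real.lt_log_iff_exp_lt hb] at hz
    apply Real.sqrt_le_iff.2 ⟨norm_nonneg _, max_le (by positivity) (by linarith)⟩
  have hm : MeasurableSet {z : ℂ | R ≤ ‖z‖} := measurableSet_le (by fun_prop) (by fun_prop)
  have h1 : ∫ z in {z : ℂ | Real.exp (-‖z‖ ^ 2) < b}, Real.exp (-‖z‖ ^ 2)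
      ≤ ∫ z in {z : ℂ | R ≤ ‖z‖}, Real.exp (-‖z‖ ^ 2) :=
    setIntegral_mono_set hI.integrableOn
      (Filter.Eventually.of_forall fun z => (Real.exp_pos _).le) hsub.eventuallyLE
  have h2 : ∫ z in {z : ℂ | R ≤ ‖z‖}, Real.exp (-‖z‖ ^ 2) = Real.pi * Real.exp (-R ^ 2) := by
    rw [← integral_indicator hm]
    have := integral_fun_norm_addHaar (volume : Measure ℂ)
      (fun y => (Set.Ici R).indicator (fun y => Real.exp (-y ^ 2)) y)
    have e : ∀ z : ℂ, (Set.Ici R).indicator (fun y => Real.exp (-y ^ 2)) ‖z‖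
      = {z : ℂ | R ≤ ‖z‖}.indicator (fun z => Real.exp (-‖z‖ ^ 2)) z := fun z => by
        simp [Set.indicator_apply]
    simp only [e] at this
    rw [this]
    simp only [Complex.finrank_real_complex, smul_eq_mul, pow_one, Nat.reduceSub]
    have e2 : ∫ y in Set.Ioi (0:ℝ), y * (Set.Ici R).indicator (fun y => Real.exp (-y ^ 2)) y
       = ∫ y in Set.Ioi R, y * Real.exp (-y ^ 2) := by
      have : ∀ y : ℝ, y * (Set.Ici R).indicator (fun y => Real.exp (-y ^ 2)) y
        = (Set.Ici R).indicator (fun y => y * Real.exp (-y ^ 2)) y := fun y => by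
          simp only [Set.indicator_apply]; split_ifs <;> simp
      simp only [this]
      rw [← integral_Ici_eq_integral_Ioi, setIntegral_indicator measurableSet_Ici,
        Set.Ici_inter_Ici, max_eq_right hR0, integral_Ici_eq_integral_Ioi]
    have e3 : ∫ y in Set.Ioi R, y * Real.exp (-y ^ 2) = Real.exp (-R ^ 2) / 2 := by
      have hd : ∀ y ∈ Set.Ici R, HasDerivAt (fun y : ℝ => -Real.exp (-y ^ 2) / 2)
          (y * Real.exp (-y ^ 2)) y := fun y _ => by
        have := (((hasDerivAt_pow 2 y).fun_neg).exp.fun_neg).div_const 2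
        refine this.congr_deriv ?_
        norm_num
        ring
      have ht : Filter.Tendsto (fun y : ℝ => -Real.exp (-y ^ 2) / 2) Filter.atTop (nhds 0) := by
        have : Filter.Tendsto (fun y : ℝ => Real.exp (-y ^ 2)) Filter.atTop (nhds 0) :=
          Real.tendsto_exp_neg_atTop_nhds_zero.comp (Filter.tendsto_pow_atTop (by norm_num))
        simpa using this.neg.div_const 2
      rw [integral_Ioi_of_hasDerivAt_of_nonneg' hd (fun y hy => by
        have : 0 < y := lt_of_le_of_lt hR0 hy
        positivity) ht]
      ring
    rw [e2, e3, Measure.real, Complex.volume_ball]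
    simp; ring
  rw [h2] at h1
  exact h1.trans (by gcongr)

lemma inner_ineq (u : ℂ) (hu : ‖u‖ ^ 2 ≤ 1 / 4) :
    (1 / 9) * ‖u‖ ^ 2 + (4 / 25) * (u ^ 2).re ≤ (ρ u) ^ 2 := by
  rw [ρ, sq_abs]
  have h1 : ‖1 + u‖ ^ 2 = 1 + 2 * u.re + ‖u‖ ^ 2 := by
    rw [← Complex.normSq_eq_norm_sq, ← Complex.normSq_eq_norm_sq, Complex.normSq_apply,
      Complex.normSq_apply]; simp; ring
  have h2 : (u ^ 2).re = 2 * u.re ^ 2 - ‖u‖ ^ 2 := by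
    rw [← Complex.normSq_eq_norm_sq, Complex.normSq_apply, pow_two]; simp; ring
  have h3 : ‖1 + u‖ ≤ 3 / 2 := by
    have := norm_add_le 1 u
    rw [norm_one] at this
    have : ‖u‖ ≤ 1 / 2 := abs_le_of_sq_le_sq' (by linarith) (by norm_num) |>.2
    linarith
  rw [h2]
  have h0 := norm_nonneg (1 + u)
  have hq := sq_nonneg ‖u‖
  set x := ‖1 + u‖
  set s := ‖u‖ ^ 2
  have h4 : ((x - 1) * (x + 1)) ^ 2 = (2 * u.re + s) ^ 2 := by
    have : (x - 1) * (x + 1) = 2 * u.re + s := by linarith [h1]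
    rw [this]
  have h5 : (x + 1) ^ 2 ≤ 25 / 4 := by nlinarith
  have h6 : (2 * u.re + s) ^ 2 ≤ (x - 1) ^ 2 * (25 / 4) := by
    rw [← h4, mul_pow]; gcongr
  have h7 : 2 * u.re ^ 2 - s ^ 2 ≤ (2 * u.re + s) ^ 2 := by nlinarith [sq_nonneg (u.re + s)]
  nlinarith

lemma outer_ineq (u : ℂ) :
    (1 / 9) * ‖u‖ ^ 2 + (2 / 9) * u.re - 1 / 72 ≤ (ρ u) ^ 2 := by
  rw [ρ, sq_abs]
  have h1 : ‖1 + u‖ ^ 2 = 1 + 2 * u.re + ‖u‖ ^ 2 := by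
    rw [← Complex.normSq_eq_norm_sq, ← Complex.normSq_eq_norm_sq, Complex.normSq_apply,
      Complex.normSq_apply]; simp; ring
  nlinarith [sq_nonneg (‖1 + u‖ - 9 / 8)]


lemma int_pow (n : ℕ) : Integrable (fun z : ℂ => z ^ n * (Real.exp (-‖z‖ ^ 2) : ℂ)) := by
  simpa only [pow_zero, mul_one] using int_mono n 0

lemma poly_expand (D : ℕ) (a : ℕ → ℂ) (z : ℂ) :
    poly D a z * (Real.exp (-‖z‖ ^ 2) : ℂ)
      = ∑ n ∈ Finset.Icc 1 D, a n * (z ^ n * (Real.exp (-‖z‖ ^ 2) : ℂ)) := by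
  rw [poly, Finset.sum_mul]
  exact Finset.sum_congr rfl fun n _ => by ring

lemma poly2_expand (D : ℕ) (a : ℕ → ℂ) (z : ℂ) :
    poly D a z ^ 2 * (Real.exp (-‖z‖ ^ 2) : ℂ)
      = ∑ n ∈ Finset.Icc 1 D, ∑ m ∈ Finset.Icc 1 D,
        a n * a m * (z ^ (n + m) * (Real.exp (-‖z‖ ^ 2) : ℂ)) := by
  rw [poly, pow_two, Finset.sum_mul_sum, Finset.sum_mul]
  refine Finset.sum_congr rfl fun n _ => ?_
  rw [Finset.sum_mul]
  exact Finset.sum_congr rfl fun m _ => by ring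

lemma int_p1 (D : ℕ) (a : ℕ → ℂ) :
    Integrable (fun z => poly D a z * (Real.exp (-‖z‖ ^ 2) : ℂ)) := by
  simp only [poly_expand]
  exact integrable_finsetSum _ fun n _ => (int_pow n).const_mul _

lemma int_p2 (D : ℕ) (a : ℕ → ℂ) :
    Integrable (fun z => poly D a z ^ 2 * (Real.exp (-‖z‖ ^ 2) : ℂ)) := by
  simp only [poly2_expand]
  exact integrable_finsetSum _ fun n _ => integrable_finsetSum _ fun m _ =>
    (int_pow (n + m)).const_mul _

lemma re_of (F : ℂ → ℂ) (s : Set ℂ) (hF : Integrable (fun z => F z * (Real.exp (-‖z‖ ^ 2) : ℂ)))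
    (h0 : ∫ z in s, F z * (Real.exp (-‖z‖ ^ 2) : ℂ) = 0) :
    Integrable (fun z => (F z).re * Real.exp (-‖z‖ ^ 2)) ∧
      ∫ z in s, (F z).re * Real.exp (-‖z‖ ^ 2) = 0 := by
  have e : ∀ z, (F z).re * Real.exp (-‖z‖ ^ 2)
      = RCLike.re (F z * (Real.exp (-‖z‖ ^ 2) : ℂ)) := fun z => by
    rw [RCLike.re_to_complex, Complex.re_mul_ofReal]
  simp only [e]
  refine ⟨hF.re, ?_⟩
  rw [integral_re hF.integrableOn, h0]; simp

lemma zero_p1 (D : ℕ) (a : ℕ → ℂ) (P : ℝ → Prop) (hm : MeasurableSet {z : ℂ | P ‖z‖}) :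
    ∫ z in {z : ℂ | P ‖z‖}, poly D a z * (Real.exp (-‖z‖ ^ 2) : ℂ) = 0 := by
  simp only [poly_expand]
  rw [integral_finsetSum _ fun n _ => ((int_pow n).const_mul _).integrableOn]
  refine Finset.sum_eq_zero fun n hn => ?_
  rw [integral_const_mul, mono_radial n (Finset.mem_Icc.1 hn).1 P hm, mul_zero]

lemma zero_p2 (D : ℕ) (a : ℕ → ℂ) (P : ℝ → Prop) (hm : MeasurableSet {z : ℂ | P ‖z‖}) :
    ∫ z in {z : ℂ | P ‖z‖}, poly D a z ^ 2 * (Real.exp (-‖z‖ ^ 2) : ℂ) = 0 := by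
  simp only [poly2_expand]
  rw [integral_finsetSum _ fun n _ => (integrable_finsetSum _ fun m _ =>
    (int_pow (n + m)).const_mul _).integrableOn]
  refine Finset.sum_eq_zero fun n hn => ?_
  rw [integral_finsetSum _ fun m _ => ((int_pow (n + m)).const_mul _).integrableOn]
  refine Finset.sum_eq_zero fun m _ => ?_
  rw [integral_const_mul, mono_radial (n + m) (by have := (Finset.mem_Icc.1 hn).1; omega) P hm,
    mul_zero]

lemma rho_le (u : ℂ) : ρ u ≤ ‖u‖ := by
  have := abs_norm_sub_norm_le (1 + u) 1
  simpa [ρ] using this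

lemma rho_nonneg (u : ℂ) : 0 ≤ ρ u := abs_nonneg _

lemma main_bound_s2 (D : ℕ) (a : ℕ → ℂ) :
    Real.pi * nsq D a / 18 ≤ ∫ z : ℂ, ρ (poly D a z) ^ 2 * Real.exp (-‖z‖ ^ 2) := by
  have hN : 0 ≤ nsq D a := Finset.sum_nonneg fun n _ => by positivity
  rcases hN.eq_or_lt with h0 | hN
  · rw [← h0]; simp only [mul_zero, zero_div]
    exact integral_nonneg fun z => by positivity
  set P : ℝ → Prop := fun x => 4 * nsq D a ≤ Real.exp (-x ^ 2) with hP
  set Q : ℝ → Prop := fun x => Real.exp (-x ^ 2) < 4 * nsq D a with hQ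
  have hmP : MeasurableSet {z : ℂ | P ‖z‖} := measurableSet_le (by fun_prop) (by fun_prop)
  have hmQ : MeasurableSet {z : ℂ | Q ‖z‖} := measurableSet_lt (by fun_prop) (by fun_prop)
  have hc : {z : ℂ | P ‖z‖}ᶜ = {z : ℂ | Q ‖z‖} := by
    ext z; simp [hP, hQ]
  have hcont := poly_cont D a
  have hU := int_sq D a
  have hw : Integrable (fun z : ℂ => Real.exp (-‖z‖ ^ 2)) := by simpa using int_norm 0
  have hρ : Integrable (fun z : ℂ => ρ (poly D a z) ^ 2 * Real.exp (-‖z‖ ^ 2)) := by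
    refine hU.mono' ?_ (Filter.Eventually.of_forall fun z => ?_)
    · apply Continuous.aestronglyMeasurable; unfold ρ; fun_prop
    · rw [Real.norm_of_nonneg (by positivity)]
      gcongr
      · exact rho_nonneg _
      · exact rho_le _
  obtain ⟨i1, z1⟩ := re_of (poly D a) _ (int_p1 D a) (zero_p1 D a Q hmQ)
  obtain ⟨i2, z2⟩ := re_of (fun z => poly D a z ^ 2) _ (int_p2 D a) (zero_p2 D a P hmP)
  have hin : ∫ z in {z : ℂ | P ‖z‖}, ((1 / 9) * (‖poly D a z‖ ^ 2 * Real.exp (-‖z‖ ^ 2))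
      + (4 / 25) * ((poly D a z ^ 2).re * Real.exp (-‖z‖ ^ 2)))
      ≤ ∫ z in {z : ℂ | P ‖z‖}, ρ (poly D a z) ^ 2 * Real.exp (-‖z‖ ^ 2) := by
    refine setIntegral_mono_on ((hU.const_mul _).add (i2.const_mul _)).integrableOn
      hρ.integrableOn hmP fun z hz => ?_
    have hz' : 4 * nsq D a ≤ Real.exp (-‖z‖ ^ 2) := hz
    have hb : ‖poly D a z‖ ^ 2 ≤ 1 / 4 := by
      refine (pointwise D a z).trans ?_
      have e : Real.exp (-‖z‖ ^ 2) * Real.exp (‖z‖ ^ 2) = 1 := by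
        rw [← Real.exp_add]; simp
      nlinarith [Real.exp_pos (‖z‖ ^ 2)]
    have := mul_le_mul_of_nonneg_right (inner_ineq _ hb) (Real.exp_pos (-‖z‖ ^ 2)).le
    linarith
  have hout : ∫ z in {z : ℂ | Q ‖z‖}, ((1 / 9) * (‖poly D a z‖ ^ 2 * Real.exp (-‖z‖ ^ 2))
      + (2 / 9) * ((poly D a z).re * Real.exp (-‖z‖ ^ 2)) - (1 / 72) * Real.exp (-‖z‖ ^ 2))
      ≤ ∫ z in {z : ℂ | Q ‖z‖}, ρ (poly D a z) ^ 2 * Real.exp (-‖z‖ ^ 2) := by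
    refine setIntegral_mono_on (((hU.const_mul _).add (i1.const_mul _)).sub
      (hw.const_mul _)).integrableOn hρ.integrableOn hmQ fun z _ => ?_
    have := mul_le_mul_of_nonneg_right (outer_ineq (poly D a z)) (Real.exp_pos (-‖z‖ ^ 2)).le
    linarith
  rw [integral_add (hU.const_mul _).integrableOn (i2.const_mul _).integrableOn,
    integral_const_mul, integral_const_mul, z2] at hin
  have i3 : Integrable (fun z => (1 / 9) * (‖poly D a z‖ ^ 2 * Real.exp (-‖z‖ ^ 2))
      + (2 / 9) * ((poly D a z).re * Real.exp (-‖z‖ ^ 2))) :=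
    (hU.const_mul _).add (i1.const_mul _)
  rw [integral_sub i3.integrableOn
    (hw.const_mul _).integrableOn,
    integral_add (hU.const_mul _).integrableOn (i1.const_mul _).integrableOn,
    integral_const_mul, integral_const_mul, integral_const_mul, z1] at hout
  have ht : ∫ z in {z : ℂ | Q ‖z‖}, Real.exp (-‖z‖ ^ 2) ≤ Real.pi * (4 * nsq D a) :=
    tail (4 * nsq D a) (by positivity)
  have s1 := integral_add_compl hmP hρ
  have s2 := integral_add_compl hmP hU
  rw [hc] at s1 s2
  rw [parseval] at s2
  linarith

theorem stmt2 (D : ℕ) (hD : 1 ≤ D) (a : ℕ → ℂ) :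
    fockNorm (fun z => ∑ n ∈ Finset.Icc 1 D, a n * z ^ n)
      ≤ 4600 * fockNorm (fun z => ρ (∑ n ∈ Finset.Icc 1 D, a n * z ^ n)) := by
  have h1 := main_bound_s2 D a
  have h2 := parseval D a
  change fockNorm (poly D a) ≤ 4600 * fockNorm (fun z => ρ (poly D a z))
  unfold fockNorm
  simp only [Real.norm_of_nonneg (rho_nonneg _)]
  rw [h2]
  have h3 : (4600 : ℝ) = √(4600 ^ 2) := by rw [Real.sqrt_sq (by norm_num)]
  rw [h3, ← Real.sqrt_mul (by norm_num)]
  apply Real.sqrt_le_sqrt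
  have hpi : 0 < 1 / Real.pi := by positivity
  have hN : 0 ≤ Real.pi * nsq D a := by
    rw [← h2]; exact integral_nonneg fun z => by positivity
  have h4 : Real.pi * nsq D a ≤
      4600 ^ 2 * ∫ z : ℂ, ρ (poly D a z) ^ 2 * Real.exp (-‖z‖ ^ 2) := by linarith
  calc _ ≤ 1 / Real.pi * (4600 ^ 2 * ∫ z : ℂ, ρ (poly D a z) ^ 2 * Real.exp (-‖z‖ ^ 2)) :=
        mul_le_mul_of_nonneg_left h4 hpi.le
    _ = _ := by ring
end
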